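/- arXiv:1708.00704 — 7 statements merged into one kernel-verified Lean document; each statement's English description precedes it below -/
import Mathlib

section
/- Let G be a graph on n vertices and let u, v be two nonadjacent vertices of G with deg(u) + deg(v) ≥ n+1. Then for any two vertices x, y of G, the maximum length of an (x,y)-path in G + uv equals the maximum length of an (x,y)-path in G. Consequently, for any x, y, the longest (x,y)-path in the (n+1)-closure of G has the same length as the longest (x,y)-path in G. -/
open SimpleGraph

/-- Degree of a vertex, as the cardinality of its neighbour set. -/
noncomputable def degN {V : Type*} (G : SimpleGraph V) (u : V) : ℕ := (G.neighborSet u).ncard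

/-- One step of the `k`-closure operation: join a nonadjacent pair with degree sum `≥ k`. -/
def KStep {V : Type*} (k : ℕ) (G G' : SimpleGraph V) : Prop :=
  ∃ u v, u ≠ v ∧ ¬ G.Adj u v ∧ k ≤ degN G u + degN G v ∧
    G' = G ⊔ SimpleGraph.fromEdgeSet {s(u, v)}

/-- `H` is the `k`-closure of `G`: it is obtained from `G` by recursively joining
nonadjacent pairs with degree sum at least `k`, until no such pair remains. -/
def IsKClosure {V : Type*} (k : ℕ) (G H : SimpleGraph V) : Prop :=
  Relation.ReflTransGen (KStep k) G H ∧
    ∀ u v, u ≠ v → ¬ H.Adj u v → degN H u + degN H v < k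

/-- The maximum length of an `(x,y)`-path in `G` (as a supremum in `ℕ`). -/
noncomputable def maxPathLen {V : Type*} (G : SimpleGraph V) (x y : V) : ℕ :=
  sSup {l | ∃ p : G.Walk x y, p.IsPath ∧ p.length = l}

/-- The list `l` is the vertex sequence of an `(x, y)`-path of `G`. -/
def IsPathList {V : Type*} (G : SimpleGraph V) (x y : V) (l : List V) : Prop :=
  l.IsChain G.Adj ∧ l.Nodup ∧ l.head? = some x ∧ l.getLast? = some y

theorem SimpleGraph.Walk.IsPath.isPathList_support {V : Type*} {G : SimpleGraph V} {x y : V}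
    {p : G.Walk x y} (hp : p.IsPath) : IsPathList G x y p.support := by
  refine ⟨p.isChain_adj_support, hp.support_nodup, ?_, ?_⟩
  · rw [List.head?_eq_some_head p.support_ne_nil, p.head_support]
  · rw [List.getLast?_eq_some_getLast p.support_ne_nil, p.getLast_support]

theorem IsPathList.exists_isPath {V : Type*} {G : SimpleGraph V} {x y : V} {l : List V}
    (h : IsPathList G x y l) : ∃ p : G.Walk x y, p.IsPath ∧ p.length + 1 = l.length := by
  obtain ⟨hc, hnd, hx, hy⟩ := h
  have hne : l ≠ [] := by rintro rfl; simp at hx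
  obtain rfl : l.head hne = x := by simpa [List.head?_eq_some_head hne] using hx
  obtain rfl : l.getLast hne = y := by simpa [List.getLast?_eq_some_getLast hne] using hy
  refine ⟨Walk.ofSupport l hne hc, ?_, ?_⟩
  · rw [Walk.isPath_def, Walk.support_ofSupport]
    exact hnd
  · rw [Walk.length_ofSupport]
    have := List.length_pos_of_ne_nil hne
    omega

theorem List.IsChain.countP_add_countP_le {α : Type*} {a b : α → Prop} [DecidablePred a]
    [DecidablePred b] {h : α} {t : List α}
    (hc : (h :: t).IsChain fun p q => ¬ (a p ∧ b q)) :
    (h :: t).countP a + (h :: t).countP b ≤ t.length + 1 + if b h then 1 else 0 := by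
  induction t generalizing h with
  | nil => by_cases a h <;> by_cases b h <;> simp [*]
  | cons k t ih =>
    rw [List.isChain_cons_cons] at hc
    have := ih hc.2
    rw [List.countP_cons (a := h), List.countP_cons (a := h), List.length_cons]
    by_cases a h <;> by_cases b h <;> by_cases b k <;> simp_all <;> omega

theorem List.IsChain.countP_add_countP_le_of_head {α : Type*} {a b : α → Prop}
    [DecidablePred a] [DecidablePred b] {l : List α} {h : α} (hh : l.head? = some h) (hb : ¬ b h)
    (hc : l.IsChain fun p q => ¬ (a p ∧ b q)) : l.countP a + l.countP b ≤ l.length := by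
  obtain ⟨t, rfl⟩ := List.head?_eq_some_iff.mp hh
  simpa [hb] using hc.countP_add_countP_le

theorem List.IsChain.countP_add_countP_le_of_getLast {α : Type*} {a b : α → Prop}
    [DecidablePred a] [DecidablePred b] {l : List α} {h : α} (hh : l.getLast? = some h)
    (ha : ¬ a h) (hc : l.IsChain fun p q => ¬ (a p ∧ b q)) :
    l.countP a + l.countP b ≤ l.length := by
  have hc' : l.reverse.IsChain fun p q => ¬ (b p ∧ a q) := by
    rw [List.isChain_reverse]
    simpa only [and_comm] using hc
  have := hc'.countP_add_countP_le_of_head (by simpa using hh) ha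
  simp only [List.countP_reverse, List.length_reverse] at this
  omega

theorem degN_add_degN_add_length_le {V : Type*} [Fintype V] (G : SimpleGraph V) (u v : V)
    [DecidableRel G.Adj] {l : List V} (hl : l.Nodup)
    (hw : ∀ w, w ∉ l → ¬ (G.Adj u w ∧ G.Adj v w)) :
    degN G u + degN G v + l.length ≤
      l.countP (G.Adj u) + l.countP (G.Adj v) + Fintype.card V := by
  classical
  have hdeg (z : V) : degN G z = l.countP (G.Adj z) +
      (l.toFinsetᶜ.filter (G.Adj z)).card := by
    have h1 : G.neighborSet z = ((Finset.univ.filter (G.Adj z) : Finset V) : Set V) := by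
      ext; simp
    have h2 : l.countP (G.Adj z) = (l.toFinset.filter (G.Adj z)).card := by
      rw [List.countP_eq_length_filter, ← List.toFinset_card_of_nodup (hl.filter _),
        List.toFinset_filter]
      simp
    rw [degN, h1, Set.ncard_coe_finset, h2, ← Finset.card_union_of_disjoint,
      ← Finset.filter_union, Finset.union_compl]
    exact Finset.disjoint_filter_filter disjoint_compl_right
  have hdisj : Disjoint (l.toFinsetᶜ.filter (G.Adj u)) (l.toFinsetᶜ.filter (G.Adj v)) := by
    rw [Finset.disjoint_left]
    intro w h1 h2
    simp only [Finset.mem_filter, Finset.mem_compl, List.mem_toFinset] at h1 h2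
    exact hw w h1.1 ⟨h1.2, h2.2⟩
  have hle : (l.toFinsetᶜ.filter (G.Adj u)).card + (l.toFinsetᶜ.filter (G.Adj v)).card ≤
      l.toFinsetᶜ.card := by
    rw [← Finset.card_union_of_disjoint hdisj]
    exact Finset.card_le_card
      (Finset.union_subset (Finset.filter_subset _ _) (Finset.filter_subset _ _))
  have hcompl := Finset.card_add_card_compl l.toFinset
  rw [List.toFinset_card_of_nodup hl] at hcompl
  have hu := hdeg u
  have hv := hdeg v
  omega

/-- If a path splits into two paths of `G` joined through a pair `u, v` of large degree sum, then
`G` itself has a path with the same ends which is at least as long. -/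
theorem exists_isPathList_of_append {V : Type*} [Fintype V] {G : SimpleGraph V} {u v x y : V}
    {l₁ l₂ : List V} (hdeg : Fintype.card V + 1 ≤ degN G u + degN G v)
    (h₁ : IsPathList G x u l₁) (h₂ : IsPathList G v y l₂) (hnd : (l₁ ++ l₂).Nodup) :
    ∃ l, IsPathList G x y l ∧ (l₁ ++ l₂).length ≤ l.length := by
  classical
  obtain ⟨hc₁, -, hx, hu⟩ := h₁
  obtain ⟨hc₂, -, hv, hy⟩ := h₂
  by_contra! hno
  have hins : ∀ w, w ∉ l₁ ++ l₂ → ¬ (G.Adj u w ∧ G.Adj v w) := by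
    rintro w hw ⟨huw, hvw⟩
    have hperm : (l₁ ++ w :: l₂).Perm (w :: (l₁ ++ l₂)) := List.perm_middle
    have := hno (l₁ ++ w :: l₂) ⟨?_, hperm.nodup_iff.mpr (List.nodup_cons.mpr ⟨hw, hnd⟩), ?_, ?_⟩
    · simp at this
    · simp [List.isChain_append, List.isChain_cons, hc₁, hc₂, hu, hv, huw, hvw.symm]
    · simp [hx]
    · simp [List.getLast?_cons, hy]
  have hrot₁ : l₁.IsChain fun p q => ¬ (G.Adj u p ∧ G.Adj v q) := by
    rw [List.isChain_iff_forall_rel_of_append_cons_cons]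
    rintro p q c d rfl ⟨hup, hvq⟩
    have hperm : ((c ++ [p]) ++ (q :: d).reverse ++ l₂).Perm (c ++ p :: q :: d ++ l₂) := by
      refine List.Perm.append_right _ ?_
      rw [List.append_assoc]
      exact List.Perm.append_left _ (List.Perm.cons _ (List.reverse_perm _))
    refine (hno _ ⟨?_, hperm.nodup_iff.mpr hnd, ?_, ?_⟩).not_ge hperm.length_eq.ge
    · rw [List.isChain_append_cons_cons] at hc₁
      have hr : (q :: d).reverse.IsChain G.Adj := by
        rw [List.isChain_reverse]
        simpa only [G.adj_comm] using hc₁.2.2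
      have hh : (q :: d).reverse.head? = some u := by
        rw [List.head?_reverse]
        simpa using hu
      have hl : (q :: d).reverse.getLast? = some q := by simp
      rw [List.isChain_append, List.isChain_append, hh, hv]
      refine ⟨⟨hc₁.1, hr, ?_⟩, hc₂, ?_⟩
      · simpa using hup.symm
      · rw [List.getLast?_append, hl]
        simpa using hvq.symm
    · simpa using hx
    · rw [List.getLast?_append, hy]
      rfl
  have hrot₂ : l₂.IsChain fun p q => ¬ (G.Adj u p ∧ G.Adj v q) := by
    rw [List.isChain_iff_forall_rel_of_append_cons_cons]
    rintro p q c d rfl ⟨hup, hvq⟩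
    have hperm : (l₁ ++ ((c ++ [p]).reverse ++ q :: d)).Perm (l₁ ++ (c ++ p :: q :: d)) := by
      refine List.Perm.append_left _ ?_
      have : c ++ p :: q :: d = (c ++ [p]) ++ q :: d := by simp
      rw [this]
      exact List.Perm.append_right _ (List.reverse_perm _)
    refine (hno _ ⟨?_, hperm.nodup_iff.mpr hnd, ?_, ?_⟩).not_ge hperm.length_eq.ge
    · rw [List.isChain_append_cons_cons] at hc₂
      have hr : (c ++ [p]).reverse.IsChain G.Adj := by
        rw [List.isChain_reverse]
        simpa only [G.adj_comm] using hc₂.1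
      have hh : (c ++ [p]).reverse.head? = some p := by simp
      have hl : (c ++ [p]).reverse.getLast? = some v := by
        rw [List.getLast?_reverse]
        cases c <;> simpa using hv
      rw [List.isChain_append, List.isChain_append, List.head?_append, hh, hl, hu]
      refine ⟨hc₁, ⟨hr, hc₂.2.2, ?_⟩, ?_⟩
      · simpa using hvq
      · simpa using hup
    · rw [List.head?_append, hx]
      rfl
    · simp only [List.getLast?_append, List.getLast?_cons_cons] at hy ⊢
      simpa [List.getLast?_cons] using hy
  have hcount := degN_add_degN_add_length_le G u v hnd hins
  have hle₁ := hrot₁.countP_add_countP_le_of_getLast hu G.irrefl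
  have hle₂ := hrot₂.countP_add_countP_le_of_head hv G.irrefl
  simp only [List.countP_append, List.length_append] at hcount
  omega

theorem sup_fromEdgeSet_singleton_adj {V : Type*} {G : SimpleGraph V} {u v a b : V}
    (h : (G ⊔ fromEdgeSet {s(u, v)}).Adj a b) :
    G.Adj a b ∨ (a = u ∧ b = v) ∨ (a = v ∧ b = u) := by
  simp only [sup_adj, fromEdgeSet_adj, Set.mem_singleton_iff, Sym2.eq_iff] at h
  tauto

/-- A path of `G + uv` either avoids `uv` or splits at `uv` into two paths of `G`. -/
theorem isChain_or_exists_append_of_isChain_sup {V : Type*} {G : SimpleGraph V} {u v : V}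
    {l : List V} (hc : l.IsChain (G ⊔ fromEdgeSet {s(u, v)}).Adj) (hnd : l.Nodup) :
    l.IsChain G.Adj ∨ ∃ l₁ l₂ a b, l = l₁ ++ l₂ ∧ ((a = u ∧ b = v) ∨ (a = v ∧ b = u)) ∧
      l₁.IsChain G.Adj ∧ l₂.IsChain G.Adj ∧ l₁.getLast? = some a ∧ l₂.head? = some b := by
  induction l with
  | nil => simp
  | cons h t ih =>
    rw [List.nodup_cons] at hnd
    rw [List.isChain_cons] at hc
    rcases ih hc.2 hnd.2 with ht | ⟨l₁, l₂, a, b, rfl, hab, hc₁, hc₂, ha, hb⟩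
    · cases t with
      | nil => simp
      | cons k t =>
        rcases sup_fromEdgeSet_singleton_adj (hc.1 k rfl) with hG | hhk
        · exact .inl (List.isChain_cons_cons.mpr ⟨hG, ht⟩)
        · exact .inr ⟨[h], k :: t, h, k, rfl, hhk, by simp, ht, rfl, rfl⟩
    · right
      cases l₁ with
      | nil => simp at ha
      | cons k s =>
        have hha : h ≠ a := by
          rintro rfl
          exact hnd.1 (List.mem_append_left _ (List.mem_of_getLast? ha))
        have hhb : h ≠ b := by
          rintro rfl
          exact hnd.1 (List.mem_append_right _ (List.mem_of_head? hb))
        have hG : G.Adj h k := by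
          have := sup_fromEdgeSet_singleton_adj (hc.1 k rfl)
          grind
        exact ⟨h :: k :: s, l₂, a, b, rfl, hab, List.isChain_cons_cons.mpr ⟨hG, hc₁⟩, hc₂,
          by simpa using ha, hb⟩

theorem exists_isPathList_of_sup {V : Type*} [Fintype V] {G : SimpleGraph V} {u v x y : V}
    {l : List V} (hdeg : Fintype.card V + 1 ≤ degN G u + degN G v)
    (hl : IsPathList (G ⊔ fromEdgeSet {s(u, v)}) x y l) :
    ∃ l', IsPathList G x y l' ∧ l.length ≤ l'.length := by
  obtain ⟨hc, hnd, hx, hy⟩ := hl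
  rcases isChain_or_exists_append_of_isChain_sup hc hnd with
    h | ⟨l₁, l₂, a, b, rfl, hab, hc₁, hc₂, ha, hb⟩
  · exact ⟨l, ⟨h, hnd, hx, hy⟩, le_rfl⟩
  have hdeg' : Fintype.card V + 1 ≤ degN G a + degN G b := by
    rcases hab with ⟨rfl, rfl⟩ | ⟨rfl, rfl⟩ <;> omega
  have hne₁ : l₁ ≠ [] := by rintro rfl; simp at ha
  have hne₂ : l₂ ≠ [] := by rintro rfl; simp at hb
  rw [List.head?_append_of_ne_nil _ hne₁] at hx
  rw [List.getLast?_append_of_ne_nil _ hne₂] at hy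
  exact exists_isPathList_of_append hdeg' ⟨hc₁, (List.nodup_append.mp hnd).1, hx, ha⟩
    ⟨hc₂, (List.nodup_append.mp hnd).2.1, hb, hy⟩ hnd

theorem maxPathLen_le_of_forall_exists {V : Type*} [Fintype V] {G G' : SimpleGraph V} {x y : V}
    (h : ∀ p : G.Walk x y, p.IsPath → ∃ q : G'.Walk x y, q.IsPath ∧ p.length ≤ q.length) :
    maxPathLen G x y ≤ maxPathLen G' x y := by
  rcases Set.eq_empty_or_nonempty {l | ∃ p : G.Walk x y, p.IsPath ∧ p.length = l} with he | hne
  · rw [maxPathLen, he]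
    simp
  refine csSup_le hne ?_
  rintro _ ⟨p, hp, rfl⟩
  obtain ⟨q, hq, hpq⟩ := h p hp
  refine hpq.trans (le_csSup ⟨Fintype.card V, ?_⟩ ⟨q, hq, rfl⟩)
  rintro _ ⟨r, hr, rfl⟩
  exact hr.length_lt.le

theorem maxPathLen_sup_fromEdgeSet {V : Type*} [Fintype V] {G : SimpleGraph V} {u v : V}
    (hdeg : Fintype.card V + 1 ≤ degN G u + degN G v) (x y : V) :
    maxPathLen (G ⊔ fromEdgeSet {s(u, v)}) x y = maxPathLen G x y := by
  refine le_antisymm (maxPathLen_le_of_forall_exists fun p hp => ?_)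
    (maxPathLen_le_of_forall_exists fun p hp => ?_)
  · obtain ⟨l, hl, hle⟩ := exists_isPathList_of_sup hdeg hp.isPathList_support
    obtain ⟨q, hq, hlen⟩ := hl.exists_isPath
    rw [Walk.length_support] at hle
    exact ⟨q, hq, by omega⟩
  · exact ⟨p.mapLe le_sup_left, hp.mapLe le_sup_left, by simp⟩

/-- If `u, v` are nonadjacent with `deg u + deg v ≥ n+1`, then adding the edge `uv` does not
change the maximum length of an `(x,y)`-path, for any `x, y`; consequently the longest
`(x,y)`-path in the `(n+1)`-closure of `G` has the same length as in `G`. -/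
theorem stmt4 {V : Type*} [Fintype V] (G : SimpleGraph V) (n : ℕ)
    (hn : Fintype.card V = n) (u v : V) (huv : u ≠ v) (hadj : ¬ G.Adj u v)
    (hdeg : n + 1 ≤ degN G u + degN G v) :
    (∀ x y : V, maxPathLen (G ⊔ SimpleGraph.fromEdgeSet {s(u, v)}) x y = maxPathLen G x y) ∧
    (∀ H : SimpleGraph V, IsKClosure (n + 1) G H →
      ∀ x y : V, maxPathLen H x y = maxPathLen G x y) := by
  subst hn
  refine ⟨maxPathLen_sup_fromEdgeSet hdeg, ?_⟩
  rintro H ⟨hGH, -⟩ x y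
  induction hGH with
  | refl => rfl
  | tail _ hstep ih =>
    obtain ⟨a, b, -, -, hab, rfl⟩ := hstep
    exact (maxPathLen_sup_fromEdgeSet hab x y).trans ih
end

section
/- Let G be a non-Hamiltonian-connected graph on n vertices with minimum degree at least 2. Then there exists an integer s with 2 ≤ s ≤ ⌊n/2⌋ and a set of s-1 vertices of G each of degree at most s. -/
open SimpleGraph

/-- A graph is Hamiltonian-connected if every two distinct vertices are joined by a
Hamiltonian path (a path visiting every vertex exactly once). -/
def HamConn {V : Type*} [DecidableEq V] (G : SimpleGraph V) : Prop :=
  ∀ x y : V, x ≠ y → ∃ p : G.Walk x y, p.IsHamiltonian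

/-- A sequence that enumerates all vertices of `G`, from `x` to `y`, along edges of `G`. -/
structure IsHamSeq {V : Type*} [Fintype V] (G : SimpleGraph V) (x y : V) (f : ℕ → V) : Prop where
  injOn : Set.InjOn f (Set.Iio (Fintype.card V))
  first : f 0 = x
  last : f (Fintype.card V - 1) = y
  adj : ∀ k, k + 1 < Fintype.card V → G.Adj (f k) (f (k + 1))

theorem exists_walk_support_eq_map_range {V : Type*} {G : SimpleGraph V} {f : ℕ → V} (k : ℕ)
    (h : ∀ j < k, G.Adj (f j) (f (j + 1))) :
    ∃ p : G.Walk (f 0) (f k), p.support = (List.range (k + 1)).map f := by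
  induction k with
  | zero => exact ⟨Walk.nil, by simp⟩
  | succ k ih =>
    obtain ⟨p, hp⟩ := ih fun j hj => h j (by lia)
    refine ⟨p.concat (h k (by lia)), ?_⟩
    rw [Walk.support_concat, hp, List.range_succ (n := k + 1)]
    simp

section

variable {V : Type*} [Fintype V] {G : SimpleGraph V} {x y : V} {f : ℕ → V}

theorem IsHamSeq.exists_eq (h : IsHamSeq G x y f) (v : V) : ∃ k < Fintype.card V, f k = v := by
  classical
  have hcard : ((Finset.range (Fintype.card V)).image f).card = Fintype.card V := by
    rw [Finset.card_image_of_injOn, Finset.card_range]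
    simpa using h.injOn
  have hv : v ∈ (Finset.range (Fintype.card V)).image f := by
    rw [Finset.card_eq_iff_eq_univ _ |>.1 hcard]
    exact Finset.mem_univ v
  simpa using hv

theorem IsHamSeq.exists_isHamiltonian [DecidableEq V] (h : IsHamSeq G x y f) :
    ∃ p : G.Walk x y, p.IsHamiltonian := by
  obtain ⟨m, hm⟩ : ∃ m, Fintype.card V = m + 1 :=
    Nat.exists_eq_succ_of_ne_zero (Fintype.card_pos_iff.2 ⟨x⟩).ne'
  obtain ⟨p, hp⟩ := exists_walk_support_eq_map_range (G := G) (f := f) m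
    fun j hj => h.adj j (by lia)
  obtain rfl := h.first
  obtain rfl : f m = y := by simpa [hm] using h.last
  refine ⟨p, Walk.IsPath.isHamiltonian_of_mem ?_ fun w => ?_⟩
  · rw [Walk.isPath_def, hp]
    refine List.Nodup.map_on (fun a ha b hb hab => h.injOn ?_ ?_ hab) List.nodup_range <;>
      simp_all
  · obtain ⟨k, hk, rfl⟩ := h.exists_eq w
    rw [hp]
    exact List.mem_map_of_mem (by simpa [hm] using hk)

/-- A complete graph has a Hamiltonian sequence between any two distinct vertices. -/
theorem exists_isHamSeq_top (hxy : x ≠ y) : ∃ f, IsHamSeq (⊤ : SimpleGraph V) x y f := by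
  classical
  have hn : 1 < Fintype.card V := Fintype.one_lt_card_iff.2 ⟨x, y, hxy⟩
  obtain ⟨e, hx, hy⟩ : ∃ e : Fin (Fintype.card V) ≃ V,
      e ⟨0, by lia⟩ = x ∧ e ⟨Fintype.card V - 1, by lia⟩ = y := by
    let e₀ := (Fintype.equivFin V).symm
    let e₁ := e₀.trans (Equiv.swap (e₀ ⟨0, by lia⟩) x)
    have h₁ : e₁ ⟨0, by lia⟩ = x := by simp [e₁]
    refine ⟨e₁.trans (Equiv.swap (e₁ ⟨Fintype.card V - 1, by lia⟩) y), ?_, by simp⟩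
    rw [Equiv.trans_apply, Equiv.swap_apply_of_ne_of_ne]
    · exact h₁
    · rw [e₁.injective.ne_iff, Ne, Fin.mk.injEq]
      lia
    · rwa [h₁]
  have hinj : Set.InjOn (fun k => if h : k < Fintype.card V then e ⟨k, h⟩ else x)
      (Set.Iio (Fintype.card V)) := by
    intro a ha b hb hab
    rw [Set.mem_Iio] at ha hb
    simpa [ha, hb] using hab
  refine ⟨_, hinj, ?_, ?_, fun k hk => ?_⟩
  · simpa [show 0 < Fintype.card V by lia] using hx
  · simpa [show 0 < Fintype.card V by lia] using hy
  · exact fun h => absurd (hinj (Set.mem_Iio.2 (by lia)) (Set.mem_Iio.2 hk) h) (by lia)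

/-- Reversing a segment of a Hamiltonian sequence whose two end steps may be missing from `G`. -/
theorem IsHamSeq.reverse_segment {H : SimpleGraph V} (h : IsHamSeq H x y f) {i j : ℕ} (hij : i < j)
    (hj : j + 1 < Fintype.card V)
    (hadj : ∀ k, k + 1 < Fintype.card V → k ≠ i → k ≠ j → G.Adj (f k) (f (k + 1)))
    (h₁ : G.Adj (f i) (f j)) (h₂ : G.Adj (f (i + 1)) (f (j + 1))) :
    ∃ g, IsHamSeq G x y g := by
  refine ⟨fun k => f (if i < k ∧ k ≤ j then i + 1 + j - k else k), ?_, ?_, ?_, fun k hk => ?_⟩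
  · intro a ha b hb hab
    rw [Set.mem_Iio] at ha hb
    have := h.injOn (Set.mem_Iio.2 (by split_ifs <;> lia))
      (Set.mem_Iio.2 (by split_ifs <;> lia)) hab
    split_ifs at this <;> lia
  · simpa using h.first
  · rw [if_neg (by lia)]
    exact h.last
  · obtain rfl | hki := eq_or_ne k i
    · rwa [if_neg (by lia), if_pos (by lia), Nat.add_sub_cancel_left]
    obtain rfl | hkj := eq_or_ne k j
    · rwa [if_pos (by lia), if_neg (by lia), Nat.add_sub_cancel]
    by_cases hk' : i < k ∧ k ≤ j
    · rw [if_pos hk', if_pos (by lia), show i + 1 + j - k = i + 1 + j - (k + 1) + 1 by lia]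
      exact (hadj _ (by lia) (by lia) (by lia)).symm
    · rw [if_neg hk', if_neg (by lia)]
      exact hadj k hk hki hkj

/-- If a Hamiltonian sequence has a single step outside `G`, and the ends of that step have degree
sum greater than the order of `G`, then `G` itself has a Hamiltonian sequence. -/
theorem IsHamSeq.exists_of_card_lt [DecidableRel G.Adj] {H : SimpleGraph V} (h : IsHamSeq H x y f)
    {i : ℕ} (hi : i + 1 < Fintype.card V)
    (hadj : ∀ k, k + 1 < Fintype.card V → k ≠ i → G.Adj (f k) (f (k + 1)))
    (hdeg : Fintype.card V < G.degree (f i) + G.degree (f (i + 1))) :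
    ∃ g, IsHamSeq G x y g := by
  classical
  set n := Fintype.card V
  let A := (Finset.range (n - 1)).filter fun j => G.Adj (f i) (f j)
  let B := (Finset.range (n - 1)).filter fun j => G.Adj (f (i + 1)) (f (j + 1))
  have hA : G.degree (f i) ≤ A.card + 1 := by
    refine le_trans (Finset.card_le_card ?_)
      (Finset.card_image_le (s := insert (n - 1) A) (f := f) |>.trans (Finset.card_insert_le _ _))
    intro w hw
    obtain ⟨k, hk, rfl⟩ := h.exists_eq w
    refine Finset.mem_image_of_mem f ?_
    have : G.Adj (f i) (f k) := by simpa using hw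
    simp only [A, Finset.mem_insert, Finset.mem_filter, Finset.mem_range, this, and_true]
    lia
  have hB : G.degree (f (i + 1)) ≤ B.card + 1 := by
    refine le_trans (Finset.card_le_card ?_) ((Finset.card_insert_le (f 0) _).trans
      (Nat.add_le_add_right (Finset.card_image_le (s := B) (f := fun j => f (j + 1))) 1))
    intro w hw
    obtain ⟨k, hk, rfl⟩ := h.exists_eq w
    have hk' : G.Adj (f (i + 1)) (f k) := by simpa using hw
    cases k with
    | zero => exact Finset.mem_insert_self _ _
    | succ k =>
      refine Finset.mem_insert_of_mem (Finset.mem_image_of_mem (fun j => f (j + 1)) ?_)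
      simp only [B, Finset.mem_filter, Finset.mem_range, hk', and_true]
      lia
  have hAB : (A ∪ B).card ≤ n - 2 := by
    have hsub : A ∪ B ⊆ (Finset.range (n - 1)).erase i := by
      intro j hj
      rw [Finset.mem_erase]
      refine ⟨?_, ?_⟩
      · rintro rfl
        simp [A, B] at hj
      · simp only [A, B, Finset.mem_union, Finset.mem_filter] at hj
        tauto
    have := Finset.card_le_card hsub
    rw [Finset.card_erase_of_mem (Finset.mem_range.2 (by lia)), Finset.card_range] at this
    lia
  obtain ⟨j, hj⟩ : (A ∩ B).Nonempty := by
    rw [← Finset.card_pos]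
    have := Finset.card_union_add_card_inter A B
    lia
  simp only [A, B, Finset.mem_inter, Finset.mem_filter, Finset.mem_range] at hj
  obtain ⟨⟨hjn, hj₁⟩, -, hj₂⟩ := hj
  obtain hij | rfl | hij := lt_trichotomy i j
  · exact h.reverse_segment hij (by lia) (fun k hk hki _ => hadj k hk hki) hj₁ hj₂
  · exact absurd hj₁ G.irrefl
  · exact h.reverse_segment hij hi (fun k hk _ hki => hadj k hk hki) hj₁.symm hj₂.symm

/-- Bondy–Chvátal closure step for Hamiltonian paths with prescribed ends. -/
theorem IsHamSeq.exists_of_sup_edge [DecidableRel G.Adj] {u v : V}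
    (h : IsHamSeq (G ⊔ edge u v) x y f) (hdeg : Fintype.card V < G.degree u + G.degree v) :
    ∃ g, IsHamSeq G x y g := by
  by_cases hG : ∀ k, k + 1 < Fintype.card V → G.Adj (f k) (f (k + 1))
  · exact ⟨f, h.injOn, h.first, h.last, hG⟩
  push Not at hG
  obtain ⟨i, hi, hiG⟩ := hG
  have step : ∀ k, k + 1 < Fintype.card V → ¬ G.Adj (f k) (f (k + 1)) →
      f k = u ∧ f (k + 1) = v ∨ f k = v ∧ f (k + 1) = u := by
    intro k hk hkG
    have := h.adj k hk
    rw [sup_adj, edge_adj] at this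
    grind
  have hi' := step i hi hiG
  refine h.exists_of_card_lt hi (fun k hk hki => ?_) ?_
  · by_contra hkG
    have hk' := step k hk hkG
    have h₁ : f k ≠ f i := fun e =>
      hki (h.injOn (Set.mem_Iio.2 (by lia)) (Set.mem_Iio.2 (by lia)) e)
    have h₂ : f k = f (i + 1) → k = i + 1 :=
      fun e => h.injOn (Set.mem_Iio.2 (by lia)) (Set.mem_Iio.2 (by lia)) e
    have h₃ : f (k + 1) = f i → k + 1 = i :=
      fun e => h.injOn (Set.mem_Iio.2 (by lia)) (Set.mem_Iio.2 (by lia)) e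
    grind
  · obtain ⟨h₁, h₂⟩ | ⟨h₁, h₂⟩ := hi' <;> rw [h₁, h₂] <;> lia

/-- If any two nonadjacent vertices of a noncomplete graph have degree sum at most the order, then there are
`s - 1` vertices of degree at most `s`, where `s` is a degree that is at most half the order. -/
theorem exists_card_eq_degree_le [DecidableRel G.Adj] (hG : G ≠ ⊤)
    (hdeg : ∀ u v, u ≠ v → ¬ G.Adj u v → G.degree u + G.degree v ≤ Fintype.card V) :
    ∃ u, G.degree u ≤ Fintype.card V / 2 ∧
      ∃ S : Finset V, S.card = G.degree u - 1 ∧ ∀ w ∈ S, G.degree w ≤ G.degree u := by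
  classical
  let P := (Finset.univ : Finset (V × V)).filter fun p => p.1 ≠ p.2 ∧ ¬ G.Adj p.1 p.2
  have hP : P.Nonempty := by
    obtain ⟨a, b, hab, h⟩ := G.ne_top_iff_exists_not_adj.1 hG
    exact ⟨(a, b), by simp [P, hab, h]⟩
  obtain ⟨⟨u, v⟩, huv, hmax⟩ := P.exists_max_image (fun p => G.degree p.1 + G.degree p.2) hP
  simp only [P, Finset.mem_filter, Finset.mem_univ, true_and, Prod.forall] at huv hmax
  wlog hle : G.degree u ≤ G.degree v generalizing u v
  · exact this v u ⟨huv.1.symm, fun h => huv.2 h.symm⟩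
      (fun a b hab => (hmax a b hab).trans_eq (add_comm _ _)) (by lia)
  have hsum := hdeg u v huv.1 huv.2
  refine ⟨u, by lia, ?_⟩
  have hcard : G.degree u - 1 ≤ (Gᶜ.neighborFinset v).card := by
    rw [card_neighborFinset_eq_degree, degree_compl]
    lia
  obtain ⟨S, hS, hScard⟩ := Finset.exists_subset_card_eq hcard
  refine ⟨S, hScard, fun w hw => ?_⟩
  have hvw : v ≠ w ∧ ¬ G.Adj v w := by simpa using hS hw
  have := hmax w v ⟨hvw.1.symm, fun h => hvw.2 h.symm⟩
  lia

end

/-- A non-Hamiltonian-connected graph on `n` vertices with minimum degree at least 2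
has, for some `2 ≤ s ≤ ⌊n/2⌋`, a set of `s-1` vertices each of degree at most `s`. -/
theorem stmt5 {V : Type*} [Fintype V] [DecidableEq V] (G : SimpleGraph V) (n : ℕ)
    (hn : Fintype.card V = n) (hmin : ∀ v : V, 2 ≤ degN G v) (hnc : ¬ HamConn G) :
    ∃ s : ℕ, 2 ≤ s ∧ s ≤ n / 2 ∧
      ∃ S : Finset V, S.card = s - 1 ∧ ∀ v ∈ S, degN G v ≤ s := by
  classical
  subst hn
  simp only [HamConn, not_forall] at hnc
  obtain ⟨x, y, hxy, hG⟩ := hnc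
  obtain ⟨H, hGH, hH⟩ := Set.Finite.exists_le_maximal
    (Set.toFinite {H : SimpleGraph V | ¬ ∃ f, IsHamSeq H x y f})
    (show G ∈ _ from fun ⟨_, hf⟩ => hG hf.exists_isHamiltonian)
  have hle : ∀ v, degN G v ≤ H.degree v := by
    intro v
    rw [degN, ← card_neighborSet_eq_degree, ← Nat.card_eq_fintype_card, Nat.card_coe_set_eq]
    exact Set.ncard_le_ncard (fun w hw => hGH hw)
  have hne : H ≠ ⊤ := by
    rintro rfl
    exact hH.prop (exists_isHamSeq_top hxy)
  obtain ⟨u, hu, S, hS, hSdeg⟩ := exists_card_eq_degree_le hne fun u v huv hadj => by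
    by_contra! hlt
    refine hH.not_prop_of_gt (lt_sup_edge H u v huv hadj) fun ⟨f, hf⟩ => ?_
    exact hH.prop (hf.exists_of_sup_edge hlt)
  exact ⟨H.degree u, (hmin u).trans (hle u), hu, S, hS, fun v hv => (hle v).trans (hSdeg v hv)⟩
end

section
/- Let G be a Hamiltonian graph on c ≥ 6 vertices that is (c+1)-closed and non-Hamiltonian-connected with e(G) > h(c+1, ⌊c/2⌋ - 1). If G contains ⌊c/2⌋ - 1 vertices of degree at most ⌊c/2⌋, then G is isomorphic to W_{c, ⌊c/2⌋, c}. -/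
open SimpleGraph

/-- `h(n,k) = C(n-k,2) + k(k-1)`. -/
def hN (n k : ℕ) : ℕ := (n - k).choose 2 + k * (k - 1)

/-- `W_{n,k,c}`: the graph obtained from a clique on `{0, …, c-k}` by joining each of the
remaining `n-(c-k+1)` vertices to the same `k` vertices `{0, …, k-1}` of the clique. -/
def Wgraph (n k c : ℕ) : SimpleGraph (Fin n) :=
  SimpleGraph.fromRel (fun u v =>
    (u.val < c - k + 1 ∧ v.val < c - k + 1) ∨ u.val < k ∨ v.val < k)

section HamiltonConnected

variable {V : Type*} {G : SimpleGraph V}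

/-- A vertex adjacent to all the others. -/
def IsUniv (G : SimpleGraph V) (v : V) : Prop := ∀ w, w ≠ v → G.Adj v w

/-- The list of all entries of a list of pairs. -/
def flat (ps : List (V × V)) : List V := ps.flatMap fun p => [p.1, p.2]

@[simp] lemma flat_nil : flat ([] : List (V × V)) = [] := rfl

@[simp] lemma flat_cons (p : V × V) (ps : List (V × V)) :
    flat (p :: ps) = p.1 :: p.2 :: flat ps := rfl

lemma length_flat (ps : List (V × V)) : (flat ps).length = 2 * ps.length := by
  induction ps with
  | nil => rfl
  | cons p ps ih => simp [ih]; ring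

lemma flat_perm {ps qs : List (V × V)} (h : ps.Perm qs) : (flat ps).Perm (flat qs) :=
  h.flatMap_right _

/-- A path through the universal vertices `k :: ks` which visits edges `ps` and single
vertices `ss` in between. -/
lemma exists_walk_interleave [DecidableEq V] (ks : List V) :
    ∀ (k : V) (ps : List (V × V)) (ss : List V),
    (∀ v ∈ k :: ks, IsUniv G v) → (∀ p ∈ ps, G.Adj p.1 p.2) →
    (k :: ks ++ ss ++ flat ps).Nodup → ps.length + ss.length ≤ ks.length →
    ∃ p : G.Walk k ((k :: ks).getLast (List.cons_ne_nil _ _)), ∀ a, p.support.count a =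
      (k :: ks ++ ss ++ flat ps).count a := by
  induction ks with
  | nil =>
    intro k ps ss _ _ _ hl
    have h1 : ps = [] := List.length_eq_zero_iff.1 (by simp at hl; simp [hl.1])
    have h2 : ss = [] := List.length_eq_zero_iff.1 (by simp at hl; simp [hl.2])
    subst h1 h2
    exact ⟨.nil, fun a => by simp⟩
  | cons k₁ ks ih =>
    intro k ps ss hu hp hn hl
    have huk : IsUniv G k := hu k (by simp)
    have huk₁ : IsUniv G k₁ := hu k₁ (by simp)
    have hu' : ∀ v ∈ k₁ :: ks, IsUniv G v := fun v hv => hu v (List.mem_cons_of_mem _ hv)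
    match ps, ss with
    | (a, b) :: ps, ss =>
      obtain ⟨p, hc⟩ := ih k₁ ps ss hu' (fun q hq => hp q (List.mem_cons_of_mem _ hq))
        (by simp [List.nodup_append] at hn ⊢; grind) (by simp at hl ⊢; omega)
      have hab : G.Adj a b := hp (a, b) (by simp)
      have hka : G.Adj k a := huk a (by rintro rfl; simp at hn)
      have hkb : G.Adj b k₁ := (huk₁ b (by rintro rfl; simp at hn)).symm
      refine ⟨.cons hka (.cons hab (.cons hkb p)), fun x => ?_⟩
      simp [List.count_cons] at hc ⊢
      have := hc x
      omega
    | [], s :: ss =>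
      obtain ⟨p, hc⟩ := ih k₁ [] ss hu' (by simp)
        (by simp [List.nodup_append] at hn ⊢; grind) (by simp at hl ⊢; omega)
      have hka : G.Adj k s := huk s (by rintro rfl; simp at hn)
      have hkb : G.Adj s k₁ := (huk₁ s (by rintro rfl; simp at hn)).symm
      refine ⟨.cons hka (.cons hkb p), fun x => ?_⟩
      simp [List.count_cons] at hc ⊢
      have := hc x
      omega
    | [], [] =>
      obtain ⟨p, hc⟩ := ih k₁ [] [] hu' (by simp)
        (by simp at hn ⊢; grind) (by simp)
      have hkb : G.Adj k k₁ := huk k₁ (by rintro rfl; simp at hn)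
      refine ⟨.cons hkb p, fun x => ?_⟩
      simp [List.count_cons] at hc ⊢
      have := hc x
      omega

lemma exists_walk_of_univ [DecidableEq V] {K R : Finset V} {ps : List (V × V)}
    (hK : ∀ v ∈ K, IsUniv G v) (hd : Disjoint K R) (hp : ∀ p ∈ ps, G.Adj p.1 p.2)
    (hn : (flat ps).Nodup) (hR : ∀ v ∈ flat ps, v ∈ R) (hc : R.card + 1 ≤ K.card + ps.length)
    {x y : V} (hx : x ∈ K) (hy : y ∈ K) (hxy : x ≠ y) :
    ∃ p : G.Walk x y, ∀ a, p.support.count a = if a ∈ K ∪ R then 1 else 0 := by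
  have hsub : (flat ps).toFinset ⊆ R := fun v hv => hR v (by simpa using hv)
  have hcard : (flat ps).toFinset.card = 2 * ps.length := by
    rw [List.toFinset_card_of_nodup hn, length_flat]
  have hnd : (x :: (((K.erase x).erase y).toList ++ [y]) ++ (R \ (flat ps).toFinset).toList
      ++ flat ps).Nodup := by
    have := Finset.disjoint_left.1 hd
    simp [List.nodup_append, Finset.nodup_toList, hn]
    grind
  obtain ⟨p, h⟩ := exists_walk_interleave (G := G) (((K.erase x).erase y).toList ++ [y]) x ps
    (R \ (flat ps).toFinset).toList (by simp; grind) hp hnd (by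
      have h1 := Finset.card_sdiff_add_card_eq_card hsub
      have h2 := Finset.card_erase_add_one hx
      have h3 := Finset.card_erase_add_one (Finset.mem_erase.2 ⟨hxy.symm, hy⟩)
      simp only [Finset.length_toList, List.length_append, List.length_singleton]
      omega)
  refine ⟨p.copy rfl (by simp), fun a => ?_⟩
  rw [SimpleGraph.Walk.support_copy, h, hnd.count]
  congr 1
  simp
  grind

lemma exists_pairs_avoid [DecidableEq V] (y : V) {ps : List (V × V)} (hn : (flat ps).Nodup) :
    ∃ qs : List (V × V), qs ⊆ ps ∧ (flat qs).Nodup ∧ (∀ v ∈ flat qs, v ∈ flat ps ∧ v ≠ y) ∧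
      ps.length ≤ qs.length + 1 := by
  by_cases hy : y ∈ flat ps
  · obtain ⟨p, hp, hyp⟩ := List.mem_flatMap.1 hy
    have hperm := flat_perm (List.perm_cons_erase hp)
    have hn' := hperm.nodup_iff.1 hn
    refine ⟨ps.erase p, List.erase_subset, ?_, fun v hv => ⟨?_, ?_⟩, ?_⟩
    · simp at hn'; tauto
    · rw [hperm.mem_iff]; simp [hv]
    · rintro rfl
      simp at hn' hyp
      grind
    · rw [List.length_erase_of_mem hp]; omega
  · exact ⟨ps, fun _ h => h, hn, fun v hv => ⟨hv, by rintro rfl; exact hy hv⟩, by omega⟩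

/-- Enough universal vertices together with a large enough matching among the others force
Hamilton-connectedness. -/
lemma hamConn_of_univ [Fintype V] [DecidableEq V] {K : Finset V} {ps : List (V × V)}
    (hK : ∀ v ∈ K, IsUniv G v) (hK2 : 2 ≤ K.card) (hp : ∀ p ∈ ps, G.Adj p.1 p.2)
    (hn : (flat ps).Nodup) (hR : ∀ v ∈ flat ps, v ∉ K)
    (hc : Kᶜ.card + 1 ≤ K.card + ps.length) : HamConn G := by
  have one : ∀ x y : V, x ∈ K → y ∉ K → ∃ p : G.Walk x y, p.IsHamiltonian := by
    intro x y hx hy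
    obtain ⟨z, hz, hzx⟩ := Finset.exists_mem_ne hK2 x
    obtain ⟨qs, hqs, hqn, hqv, hql⟩ := exists_pairs_avoid y hn
    have := Finset.card_erase_add_one (Finset.mem_compl.2 hy)
    obtain ⟨p, h⟩ := exists_walk_of_univ (R := Kᶜ.erase y) hK
      (by rw [Finset.disjoint_left]; simp; grind) (fun p h => hp p (hqs h)) hqn
      (fun v hv => by simp; exact ⟨(hqv v hv).2, hR v (hqv v hv).1⟩) (by omega) hx hz hzx.symm
    refine ⟨p.concat (hK z hz y (by rintro rfl; exact hy hz)), fun a => ?_⟩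
    rw [SimpleGraph.Walk.support_concat, List.count_append, h]
    by_cases hay : a = y
    · subst hay; simp [hy]
    · simp [hay, Ne.symm hay]
  intro x y hxy
  by_cases hx : x ∈ K <;> by_cases hy : y ∈ K
  · obtain ⟨p, h⟩ := exists_walk_of_univ (R := Kᶜ) hK disjoint_compl_right hp hn
      (by simpa using hR) hc hx hy hxy
    exact ⟨p, fun a => by simp [h a]⟩
  · exact one x y hx hy
  · obtain ⟨p, h⟩ := one y x hy hx
    exact ⟨p.reverse, fun a => by simp [h a]⟩
  · obtain ⟨z, hz, w, hw, hzw⟩ := Finset.one_lt_card.1 hK2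
    obtain ⟨qs, hqs, hqn, hqv, hql⟩ := exists_pairs_avoid y hn
    obtain ⟨rs, hrs, hrn, hrv, hrl⟩ := exists_pairs_avoid x hqn
    have h1 := Finset.card_erase_add_one (Finset.mem_compl.2 hy)
    have h2 := Finset.card_erase_add_one (Finset.mem_erase.2 ⟨hxy, Finset.mem_compl.2 hx⟩)
    obtain ⟨p, h⟩ := exists_walk_of_univ (R := (Kᶜ.erase y).erase x) hK
      (by rw [Finset.disjoint_left]; simp; grind) (fun p h => hp p (hqs (hrs h))) hrn
      (fun v hv => by simp; exact ⟨(hrv v hv).2, (hqv v (hrv v hv).1).2,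
        hR v (hqv v (hrv v hv).1).1⟩) (by omega) hz hw hzw
    refine ⟨.cons (hK z hz x (by rintro rfl; exact hx hz)).symm
      (p.concat (hK w hw y (by rintro rfl; exact hy hw))), fun a => ?_⟩
    rw [SimpleGraph.Walk.support_cons, SimpleGraph.Walk.support_concat, 
      List.count_cons, List.count_append, h]
    by_cases hay : a = y
    · subst hay; simp [hy, hxy]
    · by_cases hax : a = x
      · subst hax; simp [hx, Ne.symm hay]
      · simp [hay, hax, Ne.symm hay, Ne.symm hax]

/-- A graph in which every vertex of `A` has a unique neighbour in `A` has a perfect matching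
on `A`. -/
lemma exists_perfect_pairs [DecidableEq V] (n : ℕ) : ∀ (A : Finset V), A.card ≤ n →
    (∀ a ∈ A, ∃! b, b ∈ A ∧ G.Adj a b) →
    ∃ ps : List (V × V), (∀ p ∈ ps, G.Adj p.1 p.2) ∧ (flat ps).Nodup ∧
      (∀ v, v ∈ flat ps ↔ v ∈ A) := by
  induction n with
  | zero =>
    intro A hA _
    have : A = ∅ := by simpa using hA
    exact ⟨[], by simp, by simp, by simp [this]⟩
  | succ n ih =>
    intro A hA h
    rcases A.eq_empty_or_nonempty with rfl | ⟨a, ha⟩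
    · exact ⟨[], by simp, by simp, by simp⟩
    obtain ⟨b, ⟨hb, hab⟩, hu⟩ := h a ha
    have hne := hab.ne
    obtain ⟨ps, h1, h2, h3⟩ := ih ((A.erase a).erase b)
      (by have := Finset.card_erase_add_one ha
          have := Finset.card_erase_le (s := A.erase a) (a := b); omega)
      (by
        intro c hc
        simp only [Finset.mem_erase] at hc
        obtain ⟨d, ⟨hd, hcd⟩, hdu⟩ := h c hc.2.2
        obtain ⟨e, -, heu⟩ := h b hb
        have hea : a = e := heu a ⟨ha, hab.symm⟩
        refine ⟨d, ⟨Finset.mem_erase.2 ⟨?_, Finset.mem_erase.2 ⟨?_, hd⟩⟩, hcd⟩, ?_⟩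
        · rintro rfl
          exact hc.2.1 ((heu c ⟨hc.2.2, hcd.symm⟩).trans hea.symm)
        · rintro rfl
          exact hc.1 (hu c ⟨hc.2.2, hcd.symm⟩)
        · rintro y ⟨hy, hcy⟩
          exact hdu y ⟨Finset.mem_of_mem_erase (Finset.mem_of_mem_erase hy), hcy⟩)
    refine ⟨(a, b) :: ps, ?_, ?_, fun v => ?_⟩
    · simpa [hab] using fun x y => h1 (x, y)
    · simp [h2, h3, hne]
    · simp [h3]; grind

end HamiltonConnected

section Counting

variable {V : Type*}

open Classical in
/-- The number of neighbours of `v` in `A`. -/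
noncomputable def degIn (G : SimpleGraph V) (A : Finset V) (v : V) : ℕ :=
  (A.filter fun w => G.Adj v w).card

variable {G : SimpleGraph V}

lemma degIn_pos_iff {A : Finset V} {v : V} : 0 < degIn G A v ↔ ∃ w ∈ A, G.Adj v w := by
  simp [degIn, Finset.card_pos, Finset.filter_nonempty_iff]

lemma degIn_mono {A B : Finset V} (h : A ⊆ B) (v : V) : degIn G A v ≤ degIn G B v :=
  by classical exact Finset.card_le_card (Finset.filter_subset_filter _ h)

lemma degIn_eq_card_iff {A : Finset V} {v : V} :
    degIn G A v = A.card ↔ ∀ w ∈ A, G.Adj v w := by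
  classical
  simp [degIn, Finset.card_filter_eq_iff]

lemma degIn_add_sdiff [DecidableEq V] {A B : Finset V} (h : B ⊆ A) (v : V) :
    degIn G B v + degIn G (A \ B) v = degIn G A v := by
  classical
  simp only [degIn, Finset.card_filter]
  rw [add_comm, Finset.sum_sdiff h]

lemma degIn_add_compl_of_notMem {A : Finset V} {v : V} (h : v ∉ A) :
    degIn G A v + degIn Gᶜ A v = A.card := by
  classical
  unfold degIn
  rw [← Finset.card_filter_add_card_filter_not (s := A) (fun w => G.Adj v w)]
  congr 2
  ext w
  simp only [Finset.mem_filter, and_congr_right_iff]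
  intro hw
  have : v ≠ w := by rintro rfl; exact h hw
  simp [this]

lemma degIn_erase_self [DecidableEq V] (A : Finset V) (v : V) :
    degIn G (A.erase v) v = degIn G A v := by
  unfold degIn
  congr 1
  ext w
  simp only [Finset.mem_filter, Finset.mem_erase]
  exact ⟨fun h => ⟨h.1.2, h.2⟩, fun h => ⟨⟨h.2.ne', h.1⟩, h.2⟩⟩

lemma degIn_add_compl_of_mem {A : Finset V} {v : V} (h : v ∈ A) :
    degIn G A v + degIn Gᶜ A v + 1 = A.card := by
  classical
  rw [← Finset.card_erase_add_one h, ← degIn_add_compl_of_notMem (G := G) (A.notMem_erase v),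
    degIn_erase_self, degIn_erase_self]

lemma sum_degIn_comm (A B : Finset V) :
    ∑ v ∈ A, degIn G B v = ∑ v ∈ B, degIn G A v := by
  classical
  simp only [degIn, Finset.card_filter]
  rw [Finset.sum_comm]
  simp only [G.adj_comm]

lemma two_mul_sum_degIn_le [DecidableEq V] {P T : Finset V} (h : P ⊆ T) :
    2 * ∑ v ∈ P, degIn G T v ≤ ∑ v ∈ T, degIn G T v + ∑ v ∈ P, degIn G P v := by
  have h1 := Finset.sum_sdiff (f := degIn G T) h
  have h2 : ∑ v ∈ T \ P, degIn G P v ≤ ∑ v ∈ T \ P, degIn G T v :=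
    Finset.sum_le_sum fun v _ => degIn_mono h v
  have h3 : ∑ v ∈ P, degIn G P v + ∑ v ∈ P, degIn G (T \ P) v = ∑ v ∈ P, degIn G T v := by
    rw [← Finset.sum_add_distrib]
    exact Finset.sum_congr rfl fun v _ => degIn_add_sdiff h v
  rw [sum_degIn_comm] at h2
  omega

lemma two_mul_degIn_le {T : Finset V} {t : V} (ht : t ∈ T) :
    2 * degIn G T t ≤ ∑ v ∈ T, degIn G T v := by
  classical
  have := two_mul_sum_degIn_le (G := G) (Finset.singleton_subset_iff.2 ht)
  have h0 : degIn G {t} t = 0 := by simp [degIn, Finset.filter_singleton]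
  simpa [h0] using this

lemma two_mul_degIn_add_le {T : Finset V} {u v : V} (hu : u ∈ T) (hv : v ∈ T) (huv : u ≠ v) :
    2 * (degIn G T u + degIn G T v) ≤ ∑ w ∈ T, degIn G T w + 2 := by
  classical
  have h := two_mul_sum_degIn_le (G := G) (P := {u, v}) (T := T) (by
    intro w; simp; rintro (rfl | rfl) <;> assumption)
  have hmem : ∀ w ∈ ({u, v} : Finset V), degIn G {u, v} w ≤ 1 := by
    intro w hw
    have := degIn_add_compl_of_mem (G := G) hw
    rw [Finset.card_pair huv] at this
    omega
  rw [Finset.sum_pair huv, Finset.sum_pair huv] at h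
  have h1 := hmem u (by simp)
  have h2 := hmem v (by simp)
  omega

lemma degN_eq [Fintype V] [DecidableEq V] (S : Finset V) (v : V) :
    degN G v = degIn G S v + degIn G Sᶜ v := by
  classical
  have := degIn_add_sdiff (G := G) (Finset.subset_univ S) v
  rw [← Finset.compl_eq_univ_sdiff] at this
  rw [this, degN, degIn, ← Set.ncard_coe_finset]
  congr 1
  ext w
  simp

lemma sum_degN [Fintype V] : ∑ v, degN G v = 2 * G.edgeSet.ncard := by
  classical
  rw [← SimpleGraph.coe_edgeFinset, Set.ncard_coe_finset,
    ← SimpleGraph.sum_degrees_eq_twice_card_edges]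
  refine Finset.sum_congr rfl fun v _ => ?_
  rw [degN, ← SimpleGraph.card_neighborFinset_eq_degree, ← Set.ncard_coe_finset,
    SimpleGraph.coe_neighborFinset]

/-- An independent set of a Hamiltonian graph contains at most half of the vertices. -/
lemma two_mul_card_indep_le [Fintype V] [DecidableEq V] (hG : G.IsHamiltonian)
    (hV : Fintype.card V ≠ 1) {I : Finset V} (hI : ∀ u ∈ I, ∀ v ∈ I, ¬ G.Adj u v) :
    2 * I.card ≤ Fintype.card V := by
  classical
  obtain ⟨a, p, hp⟩ := hG hV
  set H : SimpleGraph V := p.toSubgraph.spanningCoe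
  have hdeg : ∀ v, degN H v = 2 := by
    intro v
    exact hp.isCycle.ncard_neighborSet_toSubgraph_eq_two (hp.mem_support v)
  have h1 : ∀ v ∈ I, degIn H Iᶜ v = 2 := by
    intro v hv
    have h2 := degN_eq (G := H) I v
    have h3 : degIn H I v = 0 := by
      by_contra h
      obtain ⟨w, hw, hvw⟩ := degIn_pos_iff.1 (Nat.pos_of_ne_zero h)
      exact hI v hv w hw (p.toSubgraph.adj_sub hvw)
    rw [hdeg] at h2
    omega
  have h2 : ∀ v ∈ Iᶜ, degIn H I v ≤ 2 := by
    intro v _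
    have := degN_eq (G := H) I v
    rw [hdeg] at this
    omega
  have h3 := sum_degIn_comm (G := H) I Iᶜ
  have h4 := Finset.sum_le_sum h2
  rw [Finset.sum_congr rfl h1] at h3
  simp only [Finset.sum_const, smul_eq_mul] at h3 h4
  have := I.card_add_card_compl
  omega

lemma nonempty_iso_Wgraph [Fintype V] [DecidableEq V] {c k : ℕ} (hc : Fintype.card V = c)
    {K T : Finset V} (hKT : K ⊆ T) (hK : K.card = k) (hT : T.card = c - k + 1)
    (hadj : ∀ a b, a ≠ b → (G.Adj a b ↔ (a ∈ T ∧ b ∈ T) ∨ a ∈ K ∨ b ∈ K)) :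
    Nonempty (G ≃g Wgraph c k c) := by
  set l : List V := K.toList ++ (T \ K).toList ++ Tᶜ.toList with hl
  have hnd : l.Nodup := by
    simp [hl, List.nodup_append, Finset.nodup_toList]
    grind
  have hmem : ∀ v, v ∈ l := by intro v; simp [hl]; grind
  have hlen : l.length = c := by
    have h1 := Finset.card_sdiff_add_card_eq_card hKT
    have h2 := T.card_add_card_compl
    simp [hl]
    omega
  have hKl : K.toList.length = k := by simp [hK]
  have hTl : (K.toList ++ (T \ K).toList).length = c - k + 1 := by
    have h1 := Finset.card_sdiff_add_card_eq_card hKT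
    simp
    omega
  let e : Fin c ≃ V := (finCongr hlen.symm).trans (hnd.getEquivOfForallMemList l hmem)
  have he : ∀ i : Fin c, e i = l[i.val]'(by rw [hlen]; exact i.2) := fun i => rfl
  have hiT : ∀ i : Fin c, e i ∈ T ↔ i.val < c - k + 1 := by
    intro i
    rw [he]
    by_cases h : i.val < c - k + 1
    · have : l[i.val]'(by rw [hlen]; exact i.2) ∈ K.toList ++ (T \ K).toList := by
        simp only [hl]
        rw [List.getElem_append_left (by omega)]
        exact List.getElem_mem _
      simp at this
      simp only [h, iff_true]
      rcases this with h | h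
      · exact hKT h
      · exact h.1
    · have : l[i.val]'(by rw [hlen]; exact i.2) ∈ Tᶜ.toList := by
        simp only [hl]
        rw [List.getElem_append_right (by omega)]
        exact List.getElem_mem _
      simp at this
      simp [h, this]
  have hiK : ∀ i : Fin c, e i ∈ K ↔ i.val < k := by
    intro i
    rw [he]
    by_cases h : i.val < k
    · have : l[i.val]'(by rw [hlen]; exact i.2) ∈ K.toList := by
        simp only [hl, List.append_assoc]
        rw [List.getElem_append_left (by omega)]
        exact List.getElem_mem _
      simp at this
      simp [h, this]
    · have : l[i.val]'(by rw [hlen]; exact i.2) ∈ (T \ K).toList ++ Tᶜ.toList := by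
        simp only [hl, List.append_assoc]
        rw [List.getElem_append_right (by omega)]
        exact List.getElem_mem _
      simp at this
      simp only [h, iff_false]
      rcases this with h | h
      · exact h.2
      · exact fun h' => h (hKT h')
  refine ⟨SimpleGraph.Iso.symm ⟨e, fun {i j} => ?_⟩⟩
  by_cases hij : i = j
  · subst hij; simp
  · rw [hadj _ _ (e.injective.ne hij)]
    simp only [Wgraph, SimpleGraph.fromRel_adj, hiT, hiK]
    constructor
    · exact fun h => ⟨hij, Or.inl h⟩
    · rintro ⟨-, h | h⟩ <;> tauto

end Counting

section Structure

variable {V : Type*} [DecidableEq V] {G : SimpleGraph V} {k ε : ℕ} {S : Finset V}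

/-- Few edges join `S` to the non-universal vertices outside `S`. -/
lemma two_mul_sum_degIn_le_of_card (hε : ε ≤ 1) {U T : Finset V} (hUT : U ⊆ T)
    (hU : U.card = 2 + ε) (hT : ∀ t ∈ T, t ∉ U → IsUniv G t)
    (h : ∀ t ∈ U, degIn G S t ≤ degIn Gᶜ T t)
    (h2 : ∀ u ∈ U, ∀ v ∈ U, u ≠ v → ¬ G.Adj u v →
      degIn G S u + degIn G S v + ε ≤ degIn Gᶜ T u + degIn Gᶜ T v) :
    2 * ∑ t ∈ U, degIn G S t ≤ ∑ t ∈ T, degIn Gᶜ T t + 2 := by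
  classical
  have hsum : ∑ t ∈ U, degIn Gᶜ T t ≤ ∑ t ∈ T, degIn Gᶜ T t :=
    Finset.sum_le_sum_of_subset hUT
  have hm : ∀ t ∈ U, degIn Gᶜ T t = ∑ w ∈ U, if Gᶜ.Adj t w then 1 else 0 := by
    intro t ht
    have h0 : degIn Gᶜ (T \ U) t = 0 := by
      by_contra hne
      obtain ⟨w, hw, htw⟩ := degIn_pos_iff.1 (Nat.pos_of_ne_zero hne)
      rw [Finset.mem_sdiff] at hw
      rw [SimpleGraph.compl_adj] at htw
      exact htw.2 (hT w hw.1 hw.2 t htw.1).symm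
    rw [← degIn_add_sdiff hUT, h0, degIn, Finset.card_filter]
    simp
  refine le_trans ?_ (Nat.add_le_add_right hsum 2)
  rw [Finset.sum_congr rfl hm]
  have hsymm := fun a b => G.adj_comm a b
  interval_cases ε
  · obtain ⟨u, v, huv, rfl⟩ := Finset.card_eq_two.1 hU
    have hu := hm u (by simp)
    have hv := hm v (by simp)
    have h1u := h u (by simp)
    have h1v := h v (by simp)
    have huv2 := h2 u (by simp) v (by simp) huv
    rw [Finset.sum_pair huv] at hu hv ⊢
    rw [Finset.sum_pair huv, Finset.sum_pair huv, Finset.sum_pair huv]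
    simp only [SimpleGraph.compl_adj, ne_eq, not_true_eq_false, false_and, if_false, huv, huv.symm,
      not_false_eq_true, true_and, hsymm v u] at hu hv ⊢
    by_cases huv' : G.Adj u v <;> simp [huv'] at hu hv huv2 ⊢ <;> omega
  · obtain ⟨u, v, w, huv, huw, hvw, rfl⟩ := Finset.card_eq_three.1 hU
    have hu := hm u (by simp)
    have hv := hm v (by simp)
    have hw := hm w (by simp)
    have h1u := h u (by simp)
    have h1v := h v (by simp)
    have h1w := h w (by simp)
    have huv2 := h2 u (by simp) v (by simp) huv
    have huw2 := h2 u (by simp) w (by simp) huw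
    have hvw2 := h2 v (by simp) w (by simp) hvw
    have hs : ∀ f : V → ℕ, ∑ x ∈ {u, v, w}, f x = f u + f v + f w := by
      intro f
      rw [Finset.sum_insert (by simp [huv, huw]), Finset.sum_pair hvw, add_assoc]
    simp only [hs, SimpleGraph.compl_adj, ne_eq, not_true_eq_false, false_and, if_false, huv,
      huv.symm, huw, huw.symm, hvw, hvw.symm, not_false_eq_true, true_and, hsymm v u, hsymm w u,
      hsymm w v] at hu hv hw ⊢
    by_cases huv' : G.Adj u v <;> by_cases huw' : G.Adj u w <;> by_cases hvw' : G.Adj v w <;>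
      simp [huv', huw', hvw'] at hu hv hw huv2 huw2 hvw2 ⊢ <;> omega

variable [Fintype V]

/-- The edge bound limits the number of edges in `S`, of non-edges in `Sᶜ`, and the total
deficiency of the degrees in `S`. -/
lemma deficiency_le (hk : 3 ≤ k) (hS : S.card + 1 = k) (hT : Sᶜ.card = k + 1 + ε)
    (hdeg : ∀ s ∈ S, degN G s ≤ k) (he : G.edgeSet.ncard > hN (2 * k + ε + 1) (k - 1)) :
    ∑ s ∈ S, degIn G S s + ∑ t ∈ Sᶜ, degIn Gᶜ Sᶜ t + 2 * ∑ s ∈ S, (k - degN G s) + 8 + 2 * ε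
      ≤ 2 * k := by
  obtain ⟨j, rfl⟩ : ∃ j, k = j + 3 := ⟨k - 3, by omega⟩
  have h1 : ∑ s ∈ S, degIn G S s + ∑ s ∈ S, degIn G Sᶜ s + ∑ s ∈ S, (j + 3 - degN G s)
      = (j + 2) * (j + 3) := by
    rw [← Finset.sum_add_distrib, ← Finset.sum_add_distrib,
      Finset.sum_congr rfl (g := fun _ => j + 3), Finset.sum_const, smul_eq_mul]
    · congr 1; omega
    · intro s hs
      have := hdeg s hs
      rw [degN_eq S] at this ⊢
      omega
  have h2 := sum_degIn_comm (G := G) S Sᶜ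
  have h3 : ∑ t ∈ Sᶜ, degIn G Sᶜ t + ∑ t ∈ Sᶜ, degIn Gᶜ Sᶜ t + (j + 4 + ε)
      = (j + 4 + ε) * (j + 4 + ε) := by
    have hc : ∑ t ∈ Sᶜ, 1 = j + 4 + ε := by rw [Finset.sum_const, smul_eq_mul]; omega
    nth_rw 1 [← hc]
    rw [← Finset.sum_add_distrib, ← Finset.sum_add_distrib,
      Finset.sum_congr rfl fun t ht => degIn_add_compl_of_mem ht, Finset.sum_const, smul_eq_mul,
      hT]
  have h4 := sum_degN (G := G)
  rw [← Finset.sum_add_sum_compl S] at h4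
  simp only [degN_eq (G := G) S, Finset.sum_add_distrib] at h4
  have h5 : 2 * hN (2 * (j + 3) + ε + 1) (j + 3 - 1) =
      (j + 5 + ε) * (j + 4 + ε) + 2 * ((j + 2) * (j + 1)) := by
    have h6 : 2 * (j + 3) + ε + 1 - (j + 3 - 1) = j + 4 + ε + 1 := by omega
    have h7 := Nat.triangle_succ (j + 4 + ε)
    rw [hN, h6, Nat.choose_two_right, mul_add,
      Nat.mul_div_cancel' (Nat.even_mul_pred_self _).two_dvd]
    simp
    ring
  simp only [degN_eq (G := G) S] at h1 ⊢
  nlinarith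

/-- Consequence of closedness for two non-adjacent vertices outside `S`. -/
lemma degIn_add_le_of_not_adj (hT : Sᶜ.card = k + 1 + ε)
    (hclosed : ∀ u v : V, u ≠ v → ¬ G.Adj u v → degN G u + degN G v ≤ 2 * k + ε)
    {u v : V} (hu : u ∈ Sᶜ) (hv : v ∈ Sᶜ) (huv : u ≠ v) (h : ¬ G.Adj u v) :
    degIn G S u + degIn G S v + ε ≤ degIn Gᶜ Sᶜ u + degIn Gᶜ Sᶜ v := by
  have h1 := hclosed u v huv h
  have h2 := degIn_add_compl_of_mem (G := G) hu
  have h3 := degIn_add_compl_of_mem (G := G) hv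
  rw [degN_eq S u, degN_eq S v] at h1
  omega

/-- A vertex outside `S` is complete to `S` or has few neighbours in `S`. -/
lemma degIn_eq_or_le (hk : 3 ≤ k) (hS : S.card + 1 = k) (hT : Sᶜ.card = k + 1 + ε)
    (hdeg : ∀ s ∈ S, degN G s ≤ k)
    (hclosed : ∀ u v : V, u ≠ v → ¬ G.Adj u v → degN G u + degN G v ≤ 2 * k + ε)
    (he : G.edgeSet.ncard > hN (2 * k + ε + 1) (k - 1)) {t : V} (ht : t ∈ Sᶜ) :
    degIn G S t = S.card ∨ degIn G S t ≤ degIn Gᶜ Sᶜ t := by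
  classical
  have hD := deficiency_le hk hS hT hdeg he
  by_contra! hcon
  obtain ⟨h1, h2⟩ := hcon
  have ht' : t ∉ S := by simpa using ht
  have h3 := degIn_add_compl_of_notMem (G := G) ht'
  have h4 := two_mul_degIn_le (G := Gᶜ) ht
  have h5 := degIn_add_compl_of_mem (G := G) ht
  obtain ⟨x, hx⟩ := Nat.exists_eq_add_of_lt h2
  have h6 : degIn Gᶜ S t * (x + 1) ≤ ∑ s ∈ S, (k - degN G s) := by
    calc degIn Gᶜ S t * (x + 1) = ∑ s ∈ S with Gᶜ.Adj t s, (x + 1) := by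
          rw [Finset.sum_const, smul_eq_mul, degIn]; congr!
      _ ≤ ∑ s ∈ S with Gᶜ.Adj t s, (k - degN G s) := by
          refine Finset.sum_le_sum fun s hs => ?_
          rw [Finset.mem_filter, SimpleGraph.compl_adj] at hs
          have h7 := hclosed t s hs.2.1 hs.2.2
          rw [degN_eq S t] at h7
          omega
      _ ≤ _ := Finset.sum_le_sum_of_subset (Finset.filter_subset _ _)
  obtain ⟨n, hn⟩ : ∃ n, degIn Gᶜ S t = n + 1 := ⟨degIn Gᶜ S t - 1, by omega⟩
  rw [hn] at h6 h3
  have h7 : (n + 1) * (x + 1) = n * x + n + x + 1 := by ring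
  omega

/-- The vertices outside `S` that are complete to `S` are universal. -/
lemma isUniv_of_degIn_eq (hk : 3 ≤ k) (hS : S.card + 1 = k) (hT : Sᶜ.card = k + 1 + ε)
    (hdeg : ∀ s ∈ S, degN G s ≤ k)
    (hclosed : ∀ u v : V, u ≠ v → ¬ G.Adj u v → degN G u + degN G v ≤ 2 * k + ε)
    (he : G.edgeSet.ncard > hN (2 * k + ε + 1) (k - 1)) {t : V} (ht : t ∈ Sᶜ)
    (h : degIn G S t = S.card) : IsUniv G t := by
  have hD := deficiency_le hk hS hT hdeg he
  intro w hw
  by_cases hwS : w ∈ S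
  · exact degIn_eq_card_iff.1 h w hwS
  · by_contra hadj
    have hw' : w ∈ Sᶜ := by simpa using hwS
    have h1 := degIn_add_le_of_not_adj hT hclosed ht hw' hw.symm hadj
    have h2 := two_mul_degIn_add_le (G := Gᶜ) ht hw' hw.symm
    omega

/-- The universal vertices outside `S` number `k` or `k - 1`. -/
lemma exists_univ_set (hk : 3 ≤ k) (hS : S.card + 1 = k) (hT : Sᶜ.card = k + 1 + ε)
    (hdeg : ∀ s ∈ S, degN G s ≤ k)
    (hclosed : ∀ u v : V, u ≠ v → ¬ G.Adj u v → degN G u + degN G v ≤ 2 * k + ε)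
    (he : G.edgeSet.ncard > hN (2 * k + ε + 1) (k - 1)) :
    ∃ K ⊆ Sᶜ, (∀ v ∈ K, IsUniv G v) ∧ (K.card = k ∨ K.card + 1 = k) ∧
      (∀ t ∈ Sᶜ \ K, degIn G S t ≤ degIn Gᶜ Sᶜ t) ∧
      ∀ s ∈ S, K.card + degIn G S s + degIn G (Sᶜ \ K) s + (k - degN G s) = k := by
  classical
  have hD := deficiency_le hk hS hT hdeg he
  set K := Sᶜ.filter fun t => degIn G S t = S.card with hKdef
  have hKS : K ⊆ Sᶜ := Finset.filter_subset _ _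
  have hKu : ∀ v ∈ K, IsUniv G v := fun v hv =>
    isUniv_of_degIn_eq hk hS hT hdeg hclosed he (hKS hv) (Finset.mem_filter.1 hv).2
  have hU : ∀ t ∈ Sᶜ \ K, degIn G S t ≤ degIn Gᶜ Sᶜ t := by
    intro t ht
    rw [Finset.mem_sdiff] at ht
    refine (degIn_eq_or_le hk hS hT hdeg hclosed he ht.1).resolve_left fun h => ht.2 ?_
    exact Finset.mem_filter.2 ⟨ht.1, h⟩
  have hs : ∀ s ∈ S, K.card + degIn G S s + degIn G (Sᶜ \ K) s + (k - degN G s) = k := by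
    intro s hs
    have h1 : degIn G K s = K.card := degIn_eq_card_iff.2 fun w hw =>
      (hKu w hw s (by rintro rfl; exact (Finset.mem_compl.1 (hKS hw)) hs)).symm
    have h2 := degIn_add_sdiff (G := G) hKS s
    have h3 := hdeg s hs
    rw [degN_eq S] at h3 ⊢
    omega
  refine ⟨K, hKS, hKu, ?_, hU, hs⟩
  have h1 := Finset.sum_congr rfl hs
  simp only [Finset.sum_add_distrib, Finset.sum_const, smul_eq_mul] at h1
  rw [sum_degIn_comm S (Sᶜ \ K)] at h1
  have h2 := Finset.sum_le_sum hU
  have h3 : ∑ t ∈ Sᶜ \ K, degIn Gᶜ Sᶜ t ≤ ∑ t ∈ Sᶜ, degIn Gᶜ Sᶜ t :=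
    Finset.sum_le_sum_of_subset Finset.sdiff_subset
  by_contra! hcon
  have h4 : K.card + 2 ≤ k := by
    obtain ⟨s, hs'⟩ : S.Nonempty := Finset.card_pos.1 (by omega)
    have := hs s hs'
    omega
  have h5 := Nat.mul_le_mul_left S.card h4
  rw [mul_add] at h5
  omega

/-- The case of `k` universal vertices. -/
lemma nonempty_iso_of_card_univ_eq (hε : ε ≤ 1) (hk : 3 ≤ k) (hS : S.card + 1 = k)
    (hT : Sᶜ.card = k + 1 + ε) (hham : G.IsHamiltonian) {K : Finset V} (hKS : K ⊆ Sᶜ)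
    (hK : ∀ v ∈ K, IsUniv G v) (hKc : K.card = k)
    (hs : ∀ s ∈ S, K.card + degIn G S s + degIn G (Sᶜ \ K) s + (k - degN G s) = k) :
    Nonempty (G ≃g Wgraph (2 * k + ε) k (2 * k + ε)) := by
  have hV : Fintype.card V = 2 * k + ε := by
    have := S.card_add_card_compl
    omega
  have hU := Finset.card_sdiff_add_card_eq_card hKS
  have hSS : ∀ a ∈ S, ∀ b ∈ S, ¬ G.Adj a b := by
    intro a ha b hb hab
    have h1 := degIn_pos_iff.2 ⟨b, hb, hab⟩
    have h2 := hs a ha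
    omega
  have hSU : ∀ a ∈ S, ∀ b ∈ Sᶜ \ K, ¬ G.Adj a b := by
    intro a ha b hb hab
    have h1 := degIn_pos_iff.2 ⟨b, hb, hab⟩
    have h2 := hs a ha
    omega
  have hUU : ∀ a ∈ Sᶜ \ K, ∀ b ∈ Sᶜ \ K, a ≠ b → G.Adj a b := by
    intro a ha b hb hne
    by_contra hab
    have h1 := two_mul_card_indep_le hham (by omega) (I := insert a (insert b S)) (by
      have hab' : ¬ G.Adj b a := fun h => hab h.symm
      have ha' : ∀ s ∈ S, ¬ G.Adj a s := fun s hs' h => hSU s hs' a ha h.symm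
      have hb' : ∀ s ∈ S, ¬ G.Adj b s := fun s hs' h => hSU s hs' b hb h.symm
      intro u hu v hv
      rw [Finset.mem_insert, Finset.mem_insert] at hu hv
      rcases hu with rfl | rfl | hu <;> rcases hv with rfl | rfl | hv
      · exact G.irrefl
      · exact hab
      · exact ha' v hv
      · exact hab'
      · exact G.irrefl
      · exact hb' v hv
      · exact hSU u hu _ ha
      · exact hSU u hu _ hb
      · exact hSS u hu v hv)
    simp only [Finset.mem_sdiff, Finset.mem_compl] at ha hb
    rw [Finset.card_insert_of_notMem (by simp [hne, ha.1]),
      Finset.card_insert_of_notMem hb.1] at h1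
    have h2 : 1 < (Sᶜ \ K).card := Finset.one_lt_card.2 ⟨a, by simp [ha], b, by simp [hb], hne⟩
    omega
  refine nonempty_iso_Wgraph hV hKS hKc (by omega) fun a b hab => ?_
  by_cases ha : a ∈ K
  · simp [ha, hK a ha b hab.symm]
  by_cases hb : b ∈ K
  · simp [hb, (hK b hb a hab).symm]
  by_cases haS : a ∈ S <;> by_cases hbS : b ∈ S
  · simp [ha, hb, haS, hSS a haS b hbS]
  · simp [ha, hb, haS, hSU a haS b (by simp [hbS, hb])]
  · have : ¬ G.Adj a b := fun h => hSU b hbS a (by simp [haS, ha]) h.symm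
    simp [ha, hb, hbS, this]
  · simp [haS, hbS, hUU a (by simp [ha, haS]) b (by simp [hb, hbS]) hab]

/-- The case of `k - 1` universal vertices. -/
lemma hamConn_of_card_univ_add_one (hε : ε ≤ 1) (hk : 3 ≤ k) (hS : S.card + 1 = k)
    (hT : Sᶜ.card = k + 1 + ε) (hdeg : ∀ s ∈ S, degN G s ≤ k)
    (hclosed : ∀ u v : V, u ≠ v → ¬ G.Adj u v → degN G u + degN G v ≤ 2 * k + ε)
    (he : G.edgeSet.ncard > hN (2 * k + ε + 1) (k - 1))
    {K : Finset V} (hKS : K ⊆ Sᶜ) (hK : ∀ v ∈ K, IsUniv G v) (hKc : K.card + 1 = k)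
    (hU : ∀ t ∈ Sᶜ \ K, degIn G S t ≤ degIn Gᶜ Sᶜ t)
    (hs : ∀ s ∈ S, K.card + degIn G S s + degIn G (Sᶜ \ K) s + (k - degN G s) = k) :
    HamConn G := by
  classical
  have hD := deficiency_le hk hS hT hdeg he
  have hUc := Finset.card_sdiff_add_card_eq_card hKS
  have hf := two_mul_sum_degIn_le_of_card (S := S) hε Finset.sdiff_subset (by omega)
    (fun t ht htU => hK t (by
      by_contra h
      exact htU (Finset.mem_sdiff.2 ⟨ht, h⟩))) hU
    (fun u hu v hv huv h => degIn_add_le_of_not_adj hT hclosed (Finset.mem_sdiff.1 hu).1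
      (Finset.mem_sdiff.1 hv).1 huv h)
  have hs' : ∀ s ∈ S, degIn G S s + degIn G (Sᶜ \ K) s + (k - degN G s) = 1 := by
    intro s h
    have := hs s h
    omega
  have hsum := Finset.sum_congr rfl hs'
  simp only [Finset.sum_add_distrib, Finset.sum_const, smul_eq_mul, mul_one] at hsum
  have hcomm := sum_degIn_comm (G := G) S (Sᶜ \ K)
  set A := S.filter fun s => 0 < degIn G S s with hA
  have hAc : A.card = ∑ s ∈ S, degIn G S s := by
    rw [hA, Finset.card_filter]
    refine Finset.sum_congr rfl fun s h => ?_
    have := hs' s h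
    split_ifs <;> omega
  obtain ⟨ps, hp, hn, hmem⟩ := exists_perfect_pairs (G := G) A.card A le_rfl (by
    intro a ha
    obtain ⟨haS, ha⟩ := Finset.mem_filter.1 ha
    obtain ⟨b, hb, hab⟩ := degIn_pos_iff.1 ha
    refine ⟨b, ⟨Finset.mem_filter.2 ⟨hb, degIn_pos_iff.2 ⟨a, haS, hab.symm⟩⟩, hab⟩, ?_⟩
    rintro c ⟨hc, hac⟩
    have h1 := hs' a haS
    have h2 : degIn G S a ≤ 1 := by omega
    rw [degIn, Finset.card_le_one] at h2
    exact h2 c (by simp [(Finset.mem_filter.1 hc).1, hac]) b (by simp [hb, hab]))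
  have hlen : 2 * ps.length = A.card := by
    rw [← length_flat, ← List.toFinset_card_of_nodup hn]
    congr 1
    ext v
    simp [hmem]
  have hSK : ∀ s ∈ S, s ∉ K := fun s h h' => Finset.mem_compl.1 (hKS h') h
  have hR : ∀ v ∈ flat ps, v ∉ K := fun v hv =>
    hSK v (Finset.mem_filter.1 ((hmem v).1 hv)).1
  have hKcompl : Kᶜ.card = k + 1 + ε := by
    have h1 := S.card_add_card_compl
    have h2 := K.card_add_card_compl
    omega
  by_cases hlarge : 3 + ε ≤ ps.length
  · exact hamConn_of_univ hK (by omega) hp hn hR (by omega)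
  · have hpos : 0 < ∑ s ∈ S, degIn G (Sᶜ \ K) s := by omega
    obtain ⟨s, hsS, hsp⟩ := Finset.sum_pos_iff.1 hpos
    obtain ⟨u, hu, hsu⟩ := degIn_pos_iff.1 hsp
    obtain ⟨huS, huK⟩ := Finset.mem_sdiff.1 hu
    have hsA : s ∉ A := by
      intro h
      have h1 := (Finset.mem_filter.1 h).2
      have h2 := hs' s hsS
      omega
    have huA : u ∉ A := fun h => Finset.mem_compl.1 huS (Finset.mem_filter.1 h).1
    refine hamConn_of_univ (ps := (s, u) :: ps) hK (by omega) ?_ ?_ ?_ ?_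
    · intro p hp'
      rcases List.mem_cons.1 hp' with rfl | h
      · exact hsu
      · exact hp p h
    · simp [hn, hmem, hsA, huA, hsu.ne]
    · intro v hv
      rw [flat_cons, List.mem_cons, List.mem_cons] at hv
      rcases hv with rfl | rfl | hv
      · exact hSK _ hsS
      · exact huK
      · exact hR v hv
    · rw [List.length_cons]
      omega

end Structure

/-- A `(c+1)`-closed, Hamiltonian, non-Hamiltonian-connected graph on `c ≥ 6` vertices
with more than `h(c+1, ⌊c/2⌋-1)` edges which has `⌊c/2⌋-1` vertices of degree at most
`⌊c/2⌋` is isomorphic to `W_{c, ⌊c/2⌋, c}`. -/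
theorem stmt10 {V : Type*} [Fintype V] [DecidableEq V] (G : SimpleGraph V) (c : ℕ)
    (hc : Fintype.card V = c) (hc6 : 6 ≤ c)
    (hclosed : ∀ u v : V, u ≠ v → ¬ G.Adj u v → degN G u + degN G v ≤ c)
    (hham : G.IsHamiltonian) (hnc : ¬ HamConn G)
    (he : G.edgeSet.ncard > hN (c + 1) (c / 2 - 1))
    (hS : ∃ S : Finset V, S.card = c / 2 - 1 ∧ ∀ v ∈ S, degN G v ≤ c / 2) :
    Nonempty (G ≃g Wgraph c (c / 2) c) := by
  obtain ⟨S, hS, hdeg⟩ := hS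
  set k := c / 2 with hk
  obtain ⟨ε, hε, hcε⟩ : ∃ ε, ε ≤ 1 ∧ c = 2 * k + ε := ⟨c % 2, by omega, by omega⟩
  clear_value k
  subst hcε
  have hcard := S.card_add_card_compl
  have hS' : S.card + 1 = k := by omega
  have hT : Sᶜ.card = k + 1 + ε := by omega
  obtain ⟨K, hKS, hK, hKc, hU, hs⟩ := exists_univ_set (by omega) hS' hT hdeg hclosed he
  rcases hKc with hKc | hKc
  · exact nonempty_iso_of_card_univ_eq hε (by omega) hS' hT hham hKS hK hKc hs
  · exact absurd (hamConn_of_card_univ_add_one hε (by omega) hS' hT hdeg hclosed he hKS hK hKc hU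
      hs) hnc
end

section
/- Let G be a 2-connected graph, C a longest cycle of G, and R a connected component of G - C. If x, y are distinct vertices of C each having a neighbor in R, and P is an (x,y)-path all of whose internal vertices lie in R (so P has length at least 2), then the successors x⁺ and y⁺ of x and y on C (in a fixed orientation) are nonadjacent. In particular, the set (N_C(R))⁺ of successors on C of vertices of C with a neighbor in R is a stable (independent) set. -/
open SimpleGraph

/-- A graph is 2-connected: at least 3 vertices and deleting any vertex leaves it connected. -/
def TwoConnected {V : Type*} [Fintype V] (G : SimpleGraph V) : Prop :=
  3 ≤ Fintype.card V ∧
    ∀ v : V, (((⊤ : G.Subgraph).deleteVerts {v}).coe).Connected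

/-- `p` is a longest cycle of `G`. -/
def IsLongestCycle {V : Type*} (G : SimpleGraph V) {v0 : V} (p : G.Walk v0 v0) : Prop :=
  p.IsCycle ∧ ∀ (w : V) (q : G.Walk w w), q.IsCycle → q.length ≤ p.length

/-- `R` is the vertex set of a connected component of `G - Cs` (the graph obtained
from `G` by deleting the vertex set `Cs`). -/
def IsCompOutside {V : Type*} (G : SimpleGraph V) (Cs R : Set V) : Prop :=
  R.Nonempty ∧ Disjoint R Cs ∧ (G.induce R).Connected ∧
    ∀ u ∈ R, ∀ v : V, G.Adj u v → v ∈ R ∪ Cs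

namespace SimpleGraph.Walk

variable {V : Type*} {G : SimpleGraph V} {u v w x x' y y' : V}

lemma exists_eq_append_cons_of_lt_length (p : G.Walk u v) {i : ℕ} (hi : i < p.length)
    (hx : p.getVert i = x) (hx' : p.getVert (i + 1) = x') :
    ∃ (a : G.Walk u x) (h : G.Adj x x') (b : G.Walk x' v),
      p = a.append (cons h b) ∧ a.length = i := by
  induction p generalizing i with
  | nil => simp at hi
  | cons h q ih =>
    cases i with
    | zero =>
      simp only [zero_add, getVert_cons_succ, getVert_zero] at hx hx'
      subst hx hx'
      exact ⟨nil, h, q, rfl, rfl⟩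
    | succ i =>
      obtain ⟨a, h', b, rfl, rfl⟩ := ih (by simpa using hi) (by simpa using hx) (by simpa using hx')
      exact ⟨cons h a, h', b, rfl, rfl⟩

/-- Exchanging two edges of a cycle for a chord between their heads and a detour between their
tails gives a longer cycle. -/
lemma IsCycle.exists_isCycle_length_lt {a : G.Walk u x} {hx : G.Adj x x'} {b : G.Walk x' y}
    {hy : G.Adj y y'} {d : G.Walk y' u}
    (hp : (a.append (cons hx (b.append (cons hy d)))).IsCycle) (hadj : G.Adj x' y')
    {q : G.Walk x y} (hq : q.IsPath) (hlen : 2 ≤ q.length)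
    (hint : ∀ z ∈ q.support, z ≠ x → z ≠ y →
      z ∉ (a.append (cons hx (b.append (cons hy d)))).support) :
    ∃ c : G.Walk x x, c.IsCycle ∧
      (a.append (cons hx (b.append (cons hy d)))).length < c.length := by
  set p := a.append (cons hx (b.append (cons hy d))) with hp_def
  set r : G.Walk y x := b.reverse.append (cons hadj (d.append a)) with hr_def
  have hperm : r.support.Perm p.support.tail := by
    rw [hp_def, hr_def, tail_support_append]
    simp only [support_append, support_reverse, support_cons, List.tail_cons]
    rw [← List.append_assoc]
    exact List.perm_append_comm.trans
      (((List.reverse_perm _).append_right _).append_left _)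
  have hr : r.IsPath := .mk' (hperm.nodup_iff.mpr hp.support_nodup)
  have hqn : x ∉ q.support.tail := by
    have := hq.support_nodup
    rw [← q.cons_tail_support] at this
    exact (List.nodup_cons.mp this).1
  have hrn : y ∉ r.support.tail := by
    have := hr.support_nodup
    rw [← r.cons_tail_support] at this
    exact (List.nodup_cons.mp this).1
  refine ⟨q.append r, hq.isCycle_append hr (fun z hzq hzr ↦ ?_) (.inl hlen), ?_⟩
  · exact hint z (List.mem_of_mem_tail hzq) (fun h ↦ hqn (h ▸ hzq)) (fun h ↦ hrn (h ▸ hzr))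
      (List.mem_of_mem_tail (hperm.mem_iff.mp (List.mem_of_mem_tail hzr)))
  · simp only [hp_def, hr_def, length_append, length_cons, length_reverse]
    lia

lemma IsCycle.exists_isCycle_length_lt_of_adj_getVert {p : G.Walk u u} (hp : p.IsCycle)
    {i j : ℕ} (hij : i < j) (hj : j < p.length)
    (hadj : G.Adj (p.getVert (i + 1)) (p.getVert (j + 1)))
    {q : G.Walk (p.getVert i) (p.getVert j)} (hq : q.IsPath) (hlen : 2 ≤ q.length)
    (hint : ∀ z ∈ q.support, z ≠ p.getVert i → z ≠ p.getVert j → z ∉ p.support) :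
    ∃ (w : V) (c : G.Walk w w), c.IsCycle ∧ p.length < c.length := by
  generalize hx : p.getVert i = x at *
  generalize hx' : p.getVert (i + 1) = x' at *
  generalize hy : p.getVert j = y at *
  generalize hy' : p.getVert (j + 1) = y' at *
  obtain ⟨a, h, b, rfl, rfl⟩ := p.exists_eq_append_cons_of_lt_length (hij.trans hj) hx hx'
  obtain ⟨k, rfl⟩ := Nat.exists_eq_add_of_lt hij
  obtain ⟨b, h', d, rfl, -⟩ := b.exists_eq_append_cons_of_lt_length (i := k) (x := y) (x' := y')
    (by simp at hj; lia) (by simpa [getVert_append, add_assoc] using hy)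
    (by simpa [getVert_append, add_assoc] using hy')
  obtain ⟨c, hc⟩ := hp.exists_isCycle_length_lt hadj hq hlen hint
  exact ⟨x, c, hc⟩

end SimpleGraph.Walk

namespace SimpleGraph

variable {V : Type*} {G : SimpleGraph V}

lemma exists_isPath_of_adj_of_induce_connected {R : Set V} (hR : (G.induce R).Connected)
    {x y r s : V} (hxy : x ≠ y) (hx : x ∉ R) (hy : y ∉ R) (hr : r ∈ R) (hs : s ∈ R)
    (hxr : G.Adj x r) (hys : G.Adj y s) :
    ∃ q : G.Walk x y, q.IsPath ∧ 2 ≤ q.length ∧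
      ∀ z ∈ q.support, z ≠ x → z ≠ y → z ∈ R := by
  obtain ⟨m, hm⟩ := (hR.preconnected ⟨r, hr⟩ ⟨s, hs⟩).exists_isPath
  let m' : G.Walk r s := m.map (Embedding.induce R).toHom
  have hm' : m'.IsPath := hm.map Subtype.val_injective
  have hsub : ∀ z ∈ m'.support, z ∈ R := by
    intro z hz
    obtain ⟨t, -, rfl⟩ := List.mem_map.mp (Walk.support_map _ m ▸ hz)
    exact t.2
  refine ⟨.cons hxr (m'.concat hys.symm), ?_, by simp, ?_⟩
  · refine (hm'.concat (fun h ↦ hy (hsub y h)) hys.symm).cons ?_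
    simp only [Walk.support_concat, List.mem_append, List.mem_singleton]
    exact fun h ↦ h.elim (fun h ↦ hx (hsub x h)) hxy
  · intro z hz hzx hzy
    simp only [Walk.support_cons, Walk.support_concat, List.mem_cons,
      List.mem_append, List.not_mem_nil, or_false, hzx, hzy, false_or] at hz
    exact hsub z hz

end SimpleGraph

lemma IsLongestCycle.not_adj_getVert_succ {V : Type*} {G : SimpleGraph V} {u : V}
    {p : G.Walk u u} (hp : IsLongestCycle G p) {i j : ℕ} (hi : i < p.length) (hj : j < p.length)
    (hij : i ≠ j) {q : G.Walk (p.getVert i) (p.getVert j)} (hq : q.IsPath) (hlen : 2 ≤ q.length)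
    (hint : ∀ z ∈ q.support, z ≠ p.getVert i → z ≠ p.getVert j → z ∉ p.support) :
    ¬ G.Adj (p.getVert (i + 1)) (p.getVert (j + 1)) := by
  intro hadj
  obtain ⟨w, c, hc, hlt⟩ : ∃ (w : V) (c : G.Walk w w), c.IsCycle ∧ p.length < c.length := by
    rcases hij.lt_or_gt with h | h
    · exact hp.1.exists_isCycle_length_lt_of_adj_getVert h hj hadj hq hlen hint
    · refine hp.1.exists_isCycle_length_lt_of_adj_getVert h hi hadj.symm hq.reverse
        (by simpa using hlen) fun z hz hzj hzi ↦ hint z (by simpa using hz) hzi hzj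
  exact (hp.2 w c hc).not_gt hlt

/-- Let `G` be 2-connected, `C` a longest cycle, `R` a component of `G - C`. If `x, y` are
distinct vertices of `C` with neighbours in `R` joined by a path with internal vertices in
`R`, then their successors on `C` are nonadjacent; in particular `(N_C(R))⁺` is stable. -/
theorem stmt11 {V : Type*} [Fintype V] (G : SimpleGraph V) (hG : TwoConnected G)
    (v0 : V) (p : G.Walk v0 v0) (hC : IsLongestCycle G p) (R : Set V)
    (hR : IsCompOutside G {x | x ∈ p.support} R) :
    (∀ i j : ℕ, i < p.length → j < p.length → p.getVert i ≠ p.getVert j →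
      (∃ r ∈ R, G.Adj (p.getVert i) r) → (∃ r ∈ R, G.Adj (p.getVert j) r) →
      ∀ (P : G.Walk (p.getVert i) (p.getVert j)), P.IsPath → 2 ≤ P.length →
        (∀ w ∈ P.support, w ≠ p.getVert i → w ≠ p.getVert j → w ∈ R) →
        ¬ G.Adj (p.getVert (i + 1)) (p.getVert (j + 1))) ∧
    (∀ i j : ℕ, i < p.length → j < p.length →
      (∃ r ∈ R, G.Adj (p.getVert i) r) → (∃ r ∈ R, G.Adj (p.getVert j) r) →
      ¬ G.Adj (p.getVert (i + 1)) (p.getVert (j + 1))) := by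
  have hout : ∀ z ∈ R, z ∉ p.support := fun z hz ↦ Set.disjoint_left.mp hR.2.1 hz
  have hpath : ∀ i j : ℕ, i < p.length → j < p.length → p.getVert i ≠ p.getVert j →
      ∀ q : G.Walk (p.getVert i) (p.getVert j), q.IsPath → 2 ≤ q.length →
        (∀ z ∈ q.support, z ≠ p.getVert i → z ≠ p.getVert j → z ∈ R) →
        ¬ G.Adj (p.getVert (i + 1)) (p.getVert (j + 1)) :=
    fun i j hi hj hij q hq hlen hint ↦ hC.not_adj_getVert_succ hi hj (fun h ↦ hij (h ▸ rfl)) hq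
      hlen fun z hz hzi hzj ↦ hout z (hint z hz hzi hzj)
  refine ⟨fun i j hi hj hij _ _ ↦ hpath i j hi hj hij, ?_⟩
  rintro i j hi hj ⟨r, hr, hir⟩ ⟨s, hs, hjs⟩
  by_cases hij : p.getVert i = p.getVert j
  · obtain rfl : i = j := hC.1.getVert_injOn' (Set.mem_ofPred.mpr (by lia))
      (Set.mem_ofPred.mpr (by lia)) hij
    exact G.loopless.irrefl _
  · obtain ⟨q, hq, hlen, hint⟩ := exists_isPath_of_adj_of_induce_connected hR.2.2.1 hij
      (fun h ↦ hout _ h (p.getVert_mem_support i)) (fun h ↦ hout _ h (p.getVert_mem_support j))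
      hr hs hir hjs
    exact hpath i j hi hj hij q hq hlen hint
end

section
/- Let G be a 2-connected non-Hamiltonian graph on n vertices, C a longest cycle in G of even length c, and suppose there is an isolated vertex u of G - C with exactly c/2 neighbors on C. Then G is a subgraph of W_{n, c/2, c}. -/
open SimpleGraph

section LongestCycle

variable {V : Type*} {G : SimpleGraph V}

/-- There is a path of length `n` from `x` to `y` in `G`, all of whose vertices lie in `S`. -/
def PathIn (G : SimpleGraph V) (S : Set V) (x y : V) (n : ℕ) : Prop :=
  ∃ q : G.Walk x y, q.IsPath ∧ (∀ z ∈ q.support, z ∈ S) ∧ q.length = n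

lemma PathIn.singleton (x : V) : PathIn G {x} x x 0 :=
  ⟨.nil, by simp, by simp, rfl⟩

lemma PathIn.mono {S T : Set V} {x y : V} {n : ℕ} (h : PathIn G S x y n) (hST : S ⊆ T) :
    PathIn G T x y n := by
  obtain ⟨q, hq, hs, hl⟩ := h
  exact ⟨q, hq, fun z hz => hST (hs z hz), hl⟩

lemma PathIn.reverse {S : Set V} {x y : V} {n : ℕ} (h : PathIn G S x y n) :
    PathIn G S y x n := by
  obtain ⟨q, hq, hs, hl⟩ := h
  exact ⟨q.reverse, hq.reverse, by simpa using hs, by simpa using hl⟩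

lemma PathIn.eq_of_length_zero {S : Set V} {x y : V} (h : PathIn G S x y 0) : x = y := by
  obtain ⟨q, _, _, hl⟩ := h
  exact SimpleGraph.Walk.eq_of_length_eq_zero hl

lemma PathIn.join {S T : Set V} {x y z w : V} {n m : ℕ} (h : PathIn G S x y n)
    (hyz : G.Adj y z) (h' : PathIn G T z w m) (hd : Disjoint S T) :
    PathIn G (S ∪ T) x w (n + m + 1) := by
  obtain ⟨q, hq, hs, rfl⟩ := h
  obtain ⟨r, hr, ht, rfl⟩ := h'
  refine ⟨q.append (.cons hyz r), ?_, ?_, ?_⟩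
  · rw [SimpleGraph.Walk.isPath_def, SimpleGraph.Walk.support_append,
      SimpleGraph.Walk.support_cons, List.tail_cons, List.nodup_append]
    refine ⟨hq.support_nodup, hr.support_nodup, ?_⟩
    rintro a ha b hb rfl
    exact Set.disjoint_left.mp hd (hs a ha) (ht a hb)
  · intro a ha
    rw [SimpleGraph.Walk.support_append, SimpleGraph.Walk.support_cons, List.tail_cons,
      List.mem_append] at ha
    exact ha.imp (hs a) (ht a)
  · simp [add_assoc]

/-- `x` and `y` are joined by a path with exactly `m` interior vertices, all lying in `O`. -/
def Linked (G : SimpleGraph V) (O : Set V) (x y : V) (m : ℕ) : Prop :=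
  (m = 0 ∧ G.Adj x y) ∨
    ∃ s t k, m = k + 1 ∧ G.Adj x s ∧ PathIn G O s t k ∧ G.Adj t y

lemma Linked.symm {O : Set V} {x y : V} {m : ℕ} (h : Linked G O x y m) : Linked G O y x m := by
  rcases h with ⟨hm, h⟩ | ⟨s, t, k, hm, hs, hp, ht⟩
  · exact .inl ⟨hm, h.symm⟩
  · exact .inr ⟨t, s, k, hm, ht.symm, hp.reverse, hs.symm⟩

lemma Linked.join {O S T : Set V} {x y z w : V} {n m k : ℕ} (hl : Linked G O y z m)
    (h : PathIn G S x y n) (h' : PathIn G T z w k) (hST : Disjoint S T) (hSO : Disjoint S O)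
    (hTO : Disjoint T O) : PathIn G (S ∪ O ∪ T) x w (n + m + k + 1) := by
  rcases hl with ⟨rfl, hyz⟩ | ⟨s, t, j, rfl, hs, hp, ht⟩
  · exact (h.join hyz h' hST).mono (by grind)
  · have := (h.join hs hp hSO).join ht h' (Set.disjoint_union_left.mpr ⟨hST, hTO.symm⟩)
    convert! this using 1

/-- `v` enumerates periodically the vertices of a cycle of length `c` in `G`, and no cycle of
`G` is longer than `c`. -/
structure LongestCycleEnum (G : SimpleGraph V) (c : ℕ) (v : ℕ → V) : Prop where
  three_le : 3 ≤ c
  periodic : ∀ i, v (i + c) = v i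
  adj_succ : ∀ i, G.Adj (v i) (v (i + 1))
  mod_eq : ∀ i j, v i = v j → i % c = j % c
  length_lt : ∀ S x y m, PathIn G S x y m → G.Adj y x → 2 ≤ m → m < c

namespace LongestCycleEnum

variable {c : ℕ} {v : ℕ → V}

lemma eq_of_lt (hv : LongestCycleEnum G c v) {a i j : ℕ} (hi : a ≤ i) (hi' : i < a + c)
    (hj : a ≤ j) (hj' : j < a + c) (h : v i = v j) : i = j := by
  have h1 : (i : ℤ) ≡ j [ZMOD c] := by exact_mod_cast (hv.mod_eq i j h : i ≡ j [MOD c])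
  have h2 := h1.dvd
  have h3 : ((j : ℤ) - i) = 0 := Int.eq_zero_of_abs_lt_dvd h2 (by rw [abs_lt]; omega)
  omega

lemma exists_between (hv : LongestCycleEnum G c v) (i : ℕ) {w : V} (hw : w ∈ Set.range v)
    (hne : w ≠ v i) : ∃ j, i < j ∧ j < i + c ∧ v j = w := by
  obtain ⟨j, rfl⟩ := hw
  have hp : Function.Periodic v c := hv.periodic
  have hc := hv.three_le
  have hmod : v (i + (j + (c - i % c)) % c) = v j := by
    rw [← hp.map_mod_nat (i + _), ← hp.map_mod_nat j]
    congr 1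
    have h1 := Nat.mod_lt i (show 0 < c by omega)
    have h2 := Nat.div_add_mod i c
    rw [Nat.add_mod_mod, show i + (j + (c - i % c)) = j + c * (i / c + 1) by
      rw [mul_add]; omega, Nat.add_mul_mod_self_left]
  refine ⟨_, ?_, ?_, hmod⟩
  · rcases Nat.eq_zero_or_pos ((j + (c - i % c)) % c) with h0 | h0
    · rw [h0] at hmod
      exact absurd hmod.symm hne
    · omega
  · have := Nat.mod_lt (j + (c - i % c)) (show 0 < c by omega)
    omega

lemma pathIn_segment (hv : LongestCycleEnum G c v) (a k : ℕ) (hk : k < c) :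
    PathIn G (v '' Set.Icc a (a + k)) (v a) (v (a + k)) k := by
  induction k with
  | zero => simpa using PathIn.singleton (v a)
  | succ k ih =>
    refine ((ih (by omega)).join (hv.adj_succ _) (PathIn.singleton _) ?_).mono ?_
    · rw [Set.disjoint_singleton_right]
      rintro ⟨i, ⟨hi, hi'⟩, h⟩
      have := hv.eq_of_lt (a := a) hi (by omega) (by omega) (by omega) h
      omega
    · rintro x (⟨i, ⟨hi, hi'⟩, rfl⟩ | rfl)
      · exact ⟨i, ⟨hi, by omega⟩, rfl⟩
      · exact ⟨a + k + 1, ⟨by omega, by omega⟩, rfl⟩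

/-- The cycle obtained by closing a segment of the longest cycle with a path outside of it. -/
lemma add_le_of_linked (hv : LongestCycleEnum G c v) {O : Set V} (hO : Disjoint (Set.range v) O)
    {b e m : ℕ} (hbe : b < e) (hec : e < b + c) (hm : 0 < m) (hl : Linked G O (v e) (v b) m) :
    e - b + 1 + m ≤ c := by
  rcases hl with ⟨h0, -⟩ | ⟨s, t, k, rfl, hs, hp, ht⟩
  · omega
  · have h := hv.pathIn_segment b (e - b) (by omega)
    rw [show b + (e - b) = e by omega] at h
    have := hv.length_lt _ _ _ _
      (h.join hs hp (hO.mono_left (Set.image_subset_range _ _))) ht (by omega)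
    omega

/-- The cycle running through `u`, along a segment of the longest cycle, then along a path outside
of it, and back along a second segment. -/
lemma add_le_of_crossing (hv : LongestCycleEnum G c v) {O : Set V} {u : V}
    (hO : Disjoint (Set.range v) O) (hu : u ∉ Set.range v) (huO : u ∉ O) {a b d e m : ℕ}
    (hab : a ≤ b) (hbd : b < d) (hde : d ≤ e) (hea : e < a + c) (hua : G.Adj u (v a))
    (hud : G.Adj u (v d)) (hl : Linked G O (v e) (v b) m) :
    (b - a) + (e - d) + m + 3 ≤ c := by
  have h1 := hv.pathIn_segment a (b - a) (by omega)
  have h2 := hv.pathIn_segment d (e - d) (by omega)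
  rw [show a + (b - a) = b by omega] at h1
  rw [show d + (e - d) = e by omega] at h2
  have h3 := (PathIn.singleton u).join hud h2 (by
    rw [Set.disjoint_singleton_left]
    exact fun h => hu (Set.image_subset_range _ _ h))
  have h4 := hl.join h3 h1.reverse ?_ ?_ ?_
  · have := hv.length_lt _ _ _ _ h4 hua.symm (by omega)
    omega
  · rw [Set.disjoint_left]
    rintro x (rfl | ⟨i, ⟨hi, hi'⟩, rfl⟩) ⟨j, ⟨hj, hj'⟩, h⟩
    · exact hu ⟨j, h⟩
    · have := hv.eq_of_lt (a := a) (by omega) (by omega) (by omega) (by omega) h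
      omega
  · rw [Set.disjoint_union_left]
    exact ⟨Set.disjoint_singleton_left.mpr huO, hO.mono_left (Set.image_subset_range _ _)⟩
  · exact hO.mono_left (Set.image_subset_range _ _)

lemma not_adj_succ_of_adj (hv : LongestCycleEnum G c v) {u : V} (hu : u ∉ Set.range v) {i : ℕ}
    (h : G.Adj u (v i)) : ¬ G.Adj u (v (i + 1)) := by
  intro h'
  have hc := hv.three_le
  have := hv.add_le_of_linked (O := {u}) (by simpa using hu) (b := i + 1) (e := i + c) (m := 1)
    (by omega) (by omega) one_pos
    (.inr ⟨u, u, 0, rfl, by simpa [hv.periodic] using h.symm, PathIn.singleton u, h'⟩)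
  omega

/-- A vertex outside the cycle with `c / 2` neighbours on it is adjacent to one of any two
consecutive vertices. -/
lemma adj_or_adj_succ (hv : LongestCycleEnum G c v) {u : V} (hu : u ∉ Set.range v)
    (heven : Even c) (hdeg : {w | w ∈ Set.range v ∧ G.Adj u w}.ncard = c / 2) (i : ℕ) :
    G.Adj u (v i) ∨ G.Adj u (v (i + 1)) := by
  classical
  have hc := hv.three_le
  have hp : Function.Periodic v c := hv.periodic
  let f : ℕ → ℕ := fun i => if G.Adj u (v i) then 1 else 0
  have hf0 : f c = f 0 := by simp only [f, ← hv.periodic 0, zero_add]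
  have hsum : ∑ i ∈ Finset.range c, f i = c / 2 := by
    rw [← hdeg, Finset.sum_boole, Nat.cast_id]
    have : {w | w ∈ Set.range v ∧ G.Adj u w} =
        v '' (((Finset.range c).filter fun i => G.Adj u (v i) : Finset ℕ) : Set ℕ) := by
      ext w
      constructor
      · rintro ⟨⟨j, rfl⟩, hj⟩
        refine ⟨j % c, ?_, hp.map_mod_nat j⟩
        simpa [hp.map_mod_nat j, hj] using Nat.mod_lt j (by omega)
      · rintro ⟨j, hj, rfl⟩
        exact ⟨⟨j, rfl⟩, by simp_all⟩
    rw [this, Set.InjOn.ncard_image, Set.ncard_coe_finset]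
    intro j hj k hk h
    simp only [Finset.coe_filter, Finset.mem_range, Set.mem_ofPred_eq] at hj hk
    exact hv.eq_of_lt (a := 0) (by omega) (by omega) (by omega) (by omega) h
  have hsum' : ∑ i ∈ Finset.range c, f (i + 1) = c / 2 := by
    have h1 := Finset.sum_range_succ f c
    have h2 := Finset.sum_range_succ' f c
    omega
  have hle : ∀ i ∈ Finset.range c, f i + f (i + 1) ≤ 1 := by
    intro i _
    have := hv.not_adj_succ_of_adj hu (i := i)
    simp only [f]
    split_ifs <;> simp_all
  have htot : ∑ i ∈ Finset.range c, (f i + f (i + 1)) = ∑ i ∈ Finset.range c, 1 := by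
    rw [Finset.sum_add_distrib, hsum, hsum']
    obtain ⟨k, rfl⟩ := heven
    simp
    omega
  have hone := (Finset.sum_eq_sum_iff_of_le hle).mp htot (i % c)
    (Finset.mem_range.mpr (Nat.mod_lt i (by omega)))
  have e1 : v (i % c + 1) = v (i + 1) := by
    rw [← hp.map_mod_nat (i % c + 1), ← hp.map_mod_nat (i + 1), Nat.mod_add_mod]
  simp only [f, hp.map_mod_nat i, e1] at hone
  by_contra! h
  simp [h.1, h.2] at hone

end LongestCycleEnum

/-- In a 2-connected graph any two vertices are joined by a path avoiding a given third one. -/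
lemma TwoConnected.exists_path_avoiding [Fintype V] (hG : TwoConnected G) {a x y : V}
    (hx : x ≠ a) (hy : y ≠ a) : ∃ q : G.Walk x y, q.IsPath ∧ a ∉ q.support := by
  classical
  let H := (⊤ : G.Subgraph).deleteVerts {a}
  have hmem : ∀ {z}, z ≠ a → z ∈ H.verts := fun hz => by simp [H, hz]
  obtain ⟨q, hq⟩ := ((hG.2 a).preconnected ⟨x, hmem hx⟩ ⟨y, hmem hy⟩).exists_isPath
  have ha : a ∉ (q.map H.hom).support := by
    rw [SimpleGraph.Walk.support_map, List.mem_map]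
    rintro ⟨⟨z, hz⟩, -, h⟩
    rw [SimpleGraph.Subgraph.deleteVerts_verts] at hz
    exact hz.2 h
  exact ⟨q.map H.hom, hq.map H.hom_injective, ha⟩

/-- Follow a path until it first enters `C`. -/
lemma exists_pathIn_adj_of_isPath {C : Set V} {u : V} (huiso : ∀ w, G.Adj u w → w ∈ C)
    {x y : V} (q : G.Walk x y) (hq : q.IsPath) (hx : x ∉ C) (hxu : x ≠ u) (hy : y ∈ C) :
    ∃ t w k, PathIn G {z | z ∈ q.support ∧ z ∉ C ∧ z ≠ u} x t k ∧ G.Adj t w ∧ w ∈ C ∧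
      w ∈ q.support := by
  induction q with
  | nil => exact absurd hy hx
  | @cons x s y h q ih =>
    by_cases hs : s ∈ C
    · exact ⟨x, s, 0, (PathIn.singleton x).mono (by simp [hx, hxu]), h, hs, by simp⟩
    · rw [SimpleGraph.Walk.cons_isPath_iff] at hq
      obtain ⟨t, w, k, hp, htw, hw, hwq⟩ :=
        ih hq.1 hs (fun hsu => hx (huiso x (hsu ▸ h.symm))) hy
      refine ⟨t, w, _, ((PathIn.singleton x).join h hp ?_).mono ?_, htw, hw, by simp [hwq]⟩
      · rw [Set.disjoint_singleton_left]
        exact fun h => hq.2 h.1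
      · rintro z (rfl | ⟨h1, h2⟩)
        · simp [hx, hxu]
        · simp [h1, h2]

lemma TwoConnected.exists_pathIn_adj [Fintype V] (hG : TwoConnected G) {C : Set V} {u : V}
    (huiso : ∀ w, G.Adj u w → w ∈ C) (hC : C.Nontrivial) {a x : V} (hx : x ∉ C) (hxu : x ≠ u)
    (hxa : x ≠ a) :
    ∃ t w k, PathIn G ({z | z ∉ C ∧ z ≠ u} \ {a}) x t k ∧ G.Adj t w ∧ w ∈ C ∧ w ≠ a := by
  obtain ⟨y, hy, hya⟩ := hC.exists_ne a
  obtain ⟨q, hq, haq⟩ := hG.exists_path_avoiding hxa hya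
  obtain ⟨t, w, k, hp, htw, hw, hwq⟩ := exists_pathIn_adj_of_isPath huiso q hq hx hxu hy
  refine ⟨t, w, k, hp.mono ?_, htw, hw, fun h => haq (h ▸ hwq)⟩
  rintro z ⟨h1, h2⟩
  exact ⟨h2, fun h => haq ((h : z = a) ▸ h1)⟩

/-- In a walk ending in `C` some vertex outside `C` has a neighbour in `C` as well as one outside,
provided the start has a neighbour outside `C`. -/
lemma exists_adj_adj_of_walk {C : Set V} {x y z : V} (q : G.Walk x y) (hx : x ∉ C) (hy : y ∈ C)
    (hz : z ∉ C) (hxz : G.Adj x z) :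
    ∃ x' z' w, x' ∉ C ∧ z' ∉ C ∧ w ∈ C ∧ G.Adj x' z' ∧ G.Adj x' w := by
  induction q generalizing z with
  | nil => exact absurd hy hx
  | @cons x s y h q ih =>
    by_cases hs : s ∈ C
    · exact ⟨x, z, s, hx, hz, hs, hxz, h⟩
    · exact ih hs hy hx h.symm

/-- A component outside `C` with at least two vertices links two vertices of `C` by a path with at
least two interior vertices. -/
lemma TwoConnected.exists_linked_of_adj [Fintype V] (hG : TwoConnected G) {C : Set V} {u : V}
    (huiso : ∀ w, G.Adj u w → w ∈ C) (hC : C.Nontrivial) {x y : V} (hx : x ∉ C) (hy : y ∉ C)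
    (hxy : G.Adj x y) :
    ∃ w₁ w₂ m, w₁ ∈ C ∧ w₂ ∈ C ∧ w₂ ≠ w₁ ∧ 2 ≤ m ∧ Linked G {z | z ∉ C ∧ z ≠ u} w₁ w₂ m := by
  obtain ⟨w₀, hw₀⟩ := hC.nonempty
  obtain ⟨q, -, -⟩ := hG.exists_path_avoiding (a := y) hxy.ne (fun h => hy (h ▸ hw₀))
  obtain ⟨x, z, w₁, hx, hz, hw₁, hxz, hxw₁⟩ := exists_adj_adj_of_walk q hx hw₀ hy hxy
  have hxu : x ≠ u := by rintro rfl; exact hz (huiso _ hxz)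
  have hzu : z ≠ u := by rintro rfl; exact hx (huiso _ hxz.symm)
  obtain ⟨t, w₃, k, hp, htw₃, hw₃, -⟩ := hG.exists_pathIn_adj huiso hC hz hzu hxz.ne'
  have key : ∀ w ∈ C, G.Adj x w → w₃ ≠ w → ∃ w₁ w₂ m, w₁ ∈ C ∧ w₂ ∈ C ∧ w₂ ≠ w₁ ∧ 2 ≤ m ∧
      Linked G {z | z ∉ C ∧ z ≠ u} w₁ w₂ m := by
    intro w hw hxw hne
    refine ⟨w, w₃, k + 2, hw, hw₃, hne, by omega, .inr ⟨x, t, k + 1, rfl, hxw.symm, ?_, htw₃⟩⟩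
    have := ((PathIn.singleton x).join hxz hp (by simp)).mono
      (T := {z | z ∉ C ∧ z ≠ u}) ?_
    · simpa using this
    · rintro s (rfl | hs)
      · exact ⟨hx, hxu⟩
      · exact hs.1
  by_cases h31 : w₃ = w₁
  · obtain ⟨s, w₂, j, hp', hsw₂, hw₂, hne⟩ :=
      hG.exists_pathIn_adj huiso hC (a := w₁) hx hxu (fun h => hx (h ▸ hw₁))
    rcases Nat.eq_zero_or_pos j with rfl | hj
    · exact key w₂ hw₂ (hp'.eq_of_length_zero ▸ hsw₂) (h31 ▸ hne.symm)
    · exact ⟨w₁, w₂, j + 1, hw₁, hw₂, hne, by omega,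
        .inr ⟨x, s, j, rfl, hxw₁.symm, hp'.mono Set.sdiff_subset, hsw₂⟩⟩
  · exact key w₁ hw₁ hxw₁ h31

namespace LongestCycleEnum

variable {c : ℕ} {v : ℕ → V} {u : V}

lemma not_linked_of_not_adj (hv : LongestCycleEnum G c v) (hu : u ∉ Set.range v)
    (halt : ∀ i, G.Adj u (v i) ∨ G.Adj u (v (i + 1))) {O : Set V}
    (hO : Disjoint (Set.range v) O) (huO : u ∉ O) {x y : V} {m : ℕ}
    (hx : x ∈ Set.range v) (hy : y ∈ Set.range v) (hne : y ≠ x) (hux : ¬ G.Adj u x)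
    (huy : ¬ G.Adj u y) : ¬ Linked G O x y m := by
  intro hl
  obtain ⟨i, rfl⟩ := hx
  obtain ⟨j, hij, hji, rfl⟩ := hv.exists_between i hy hne
  have := hv.add_le_of_crossing hO hu huO (a := i + 1) (b := j) (d := j + 1) (e := i + c)
    (by omega) (by omega) (by omega) (by omega) ((halt i).resolve_left hux)
    ((halt j).resolve_left huy) (by rwa [hv.periodic])
  omega

lemma not_linked_of_not_adj_of_adj (hv : LongestCycleEnum G c v) (hu : u ∉ Set.range v)
    (halt : ∀ i, G.Adj u (v i) ∨ G.Adj u (v (i + 1))) {O : Set V}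
    (hO : Disjoint (Set.range v) O) (huO : u ∉ O) {x y : V} {m : ℕ} (hm : 0 < m)
    (hx : x ∈ Set.range v) (hy : y ∈ Set.range v) (hux : ¬ G.Adj u x)
    (huy : G.Adj u y) : ¬ Linked G O x y m := by
  intro hl
  have hc := hv.three_le
  obtain ⟨i, rfl⟩ := hx
  obtain ⟨j, hij, hji, rfl⟩ := hv.exists_between i hy (by rintro h; exact hux (h ▸ huy))
  by_cases hj : j + 1 = i + c
  · have := hv.add_le_of_linked hO (b := i) (e := j) (by omega) hji hm hl.symm
    omega
  · have := hv.add_le_of_crossing hO hu huO (a := i + 1) (b := j) (d := j + 2) (e := i + c)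
      (by omega) (by omega) (by omega) (by omega) ((halt i).resolve_left hux)
      ((halt (j + 1)).resolve_left (hv.not_adj_succ_of_adj hu huy)) (by rwa [hv.periodic])
    omega

lemma not_linked_of_adj (hv : LongestCycleEnum G c v) (hu : u ∉ Set.range v)
    (halt : ∀ i, G.Adj u (v i) ∨ G.Adj u (v (i + 1))) {O : Set V}
    (hO : Disjoint (Set.range v) O) (huO : u ∉ O) {x y : V} {m : ℕ} (hm : 2 ≤ m)
    (hx : x ∈ Set.range v) (hy : y ∈ Set.range v) (hne : y ≠ x) (hux : G.Adj u x)
    (huy : G.Adj u y) : ¬ Linked G O x y m := by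
  intro hl
  obtain ⟨i, rfl⟩ := hx
  obtain ⟨j, hij, hji, rfl⟩ := hv.exists_between i hy hne
  have h1 := hv.not_adj_succ_of_adj hu hux
  have h2 := hv.not_adj_succ_of_adj hu huy
  have hj1 : j ≠ i + 1 := by rintro rfl; exact h1 huy
  have hj2 : j + 1 ≠ i + c := by
    intro h
    rw [h, hv.periodic] at h2
    exact h2 hux
  have := hv.add_le_of_crossing hO hu huO (a := i + 2) (b := j) (d := j + 2) (e := i + c)
    (by omega) (by omega) (by omega) (by omega) ((halt (i + 1)).resolve_left h1)
    ((halt (j + 1)).resolve_left h2) (by rwa [hv.periodic])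
  omega

lemma range_nontrivial (hv : LongestCycleEnum G c v) : (Set.range v).Nontrivial :=
  ⟨v 0, ⟨0, rfl⟩, v 1, ⟨1, rfl⟩, (hv.adj_succ 0).ne⟩

/-- The neighbours of `u` cover all edges of `G`. -/
lemma adj_or_adj_of_adj [Fintype V] (hv : LongestCycleEnum G c v) (hG : TwoConnected G)
    (hu : u ∉ Set.range v) (huiso : ∀ w, G.Adj u w → w ∈ Set.range v)
    (halt : ∀ i, G.Adj u (v i) ∨ G.Adj u (v (i + 1))) {x y : V} (hxy : G.Adj x y) :
    G.Adj u x ∨ G.Adj u y := by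
  have hO : Disjoint (Set.range v) {z | z ∉ Set.range v ∧ z ≠ u} :=
    Set.disjoint_left.mpr fun z hz h => h.1 hz
  have huO : u ∉ {z | z ∉ Set.range v ∧ z ≠ u} := fun h => h.2 rfl
  have hmixed : ∀ {x y}, G.Adj x y → x ∈ Set.range v → y ∉ Set.range v → G.Adj u x := by
    intro x y hxy hx hy
    by_contra hux
    have hyu : y ≠ u := by rintro rfl; exact hux hxy.symm
    obtain ⟨t, w, k, hp, htw, hw, hwx⟩ := hG.exists_pathIn_adj huiso hv.range_nontrivial
      (a := x) hy hyu hxy.ne'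
    have hl : Linked G {z | z ∉ Set.range v ∧ z ≠ u} x w (k + 1) :=
      .inr ⟨y, t, k, rfl, hxy, hp.mono Set.sdiff_subset, htw⟩
    by_cases huw : G.Adj u w
    · exact hv.not_linked_of_not_adj_of_adj hu halt hO huO k.succ_pos hx hw hux huw hl
    · exact hv.not_linked_of_not_adj hu halt hO huO hx hw hwx hux huw hl
  by_cases hx : x ∈ Set.range v <;> by_cases hy : y ∈ Set.range v
  · by_contra! h
    exact hv.not_linked_of_not_adj hu halt hO huO hx hy hxy.ne' h.1 h.2 (.inl ⟨rfl, hxy⟩)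
  · exact .inl (hmixed hxy hx hy)
  · exact .inr (hmixed hxy.symm hy hx)
  · obtain ⟨w₁, w₂, m, hw₁, hw₂, hne, hm, hl⟩ :=
      hG.exists_linked_of_adj huiso hv.range_nontrivial hx hy hxy
    by_cases h1 : G.Adj u w₁ <;> by_cases h2 : G.Adj u w₂
    · exact (hv.not_linked_of_adj hu halt hO huO hm hw₁ hw₂ hne h1 h2 hl).elim
    · exact (hv.not_linked_of_not_adj_of_adj hu halt hO huO (by omega) hw₂ hw₁ h2 h1
        hl.symm).elim
    · exact (hv.not_linked_of_not_adj_of_adj hu halt hO huO (by omega) hw₁ hw₂ h1 h2 hl).elim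
    · exact (hv.not_linked_of_not_adj hu halt hO huO hw₁ hw₂ hne h1 h2 hl).elim

end LongestCycleEnum

lemma IsLongestCycle.longestCycleEnum {v₀ : V} {p : G.Walk v₀ v₀} (hp : IsLongestCycle G p) :
    LongestCycleEnum G p.length fun i => p.getVert (i % p.length) := by
  have hc := hp.1.three_le_length
  refine ⟨hc, fun i => by simp, fun i => ?_, fun i j h => ?_, ?_⟩
  · have hi := Nat.mod_lt i (show 0 < p.length by omega)
    have h := p.adj_getVert_succ hi
    rcases Nat.lt_or_ge (i % p.length + 1) p.length with h1 | h1
    · rwa [← Nat.mod_eq_of_lt h1, Nat.mod_add_mod] at h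
    · have h2 : i % p.length + 1 = p.length := by omega
      have h3 : (i + 1) % p.length = 0 := by rw [← Nat.mod_add_mod, h2, Nat.mod_self]
      rw [h2, p.getVert_length] at h
      simpa only [h3, p.getVert_zero] using h
  · have hi := Nat.mod_lt i (show 0 < p.length by omega)
    have hj := Nat.mod_lt j (show 0 < p.length by omega)
    exact hp.1.getVert_injOn' (by simp only [Set.mem_ofPred_eq]; omega)
      (by simp only [Set.mem_ofPred_eq]; omega) h
  · rintro S x y m ⟨q, hq, -, rfl⟩ hyx hm
    have := hp.2 y (.cons hyx q) ((SimpleGraph.Walk.cons_isCycle_iff _ _).mpr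
      ⟨hq, fun h => by
        rw [Sym2.eq_swap] at h
        have := hq.length_eq_one_of_mem_edges h
        omega⟩)
    simpa using this

lemma IsLongestCycle.mem_range_iff {v₀ : V} {p : G.Walk v₀ v₀} (hp : IsLongestCycle G p) (w : V) :
    w ∈ Set.range (fun i => p.getVert (i % p.length)) ↔ w ∈ p.support := by
  have hc := hp.1.three_le_length
  rw [SimpleGraph.Walk.mem_support_iff_exists_getVert]
  constructor
  · rintro ⟨i, rfl⟩
    exact ⟨_, rfl, (Nat.mod_lt i (by omega)).le⟩
  · rintro ⟨i, rfl, hi⟩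
    refine ⟨i, ?_⟩
    rcases hi.lt_or_eq with h | rfl
    · simp [Nat.mod_eq_of_lt h]
    · simp

/-- A set of `k` vertices can be mapped to `{0, …, k - 1}` by an enumeration of the vertices. -/
lemma exists_equiv_fin_forall_mem [Fintype V] {n : ℕ} (hn : Fintype.card V = n) (A : Set V) :
    ∃ f : V ≃ Fin n, ∀ a ∈ A, (f a).val < A.ncard := by
  classical
  let e := Fintype.equivFinOfCardEq hn
  have hk : A.ncard ≤ n := hn ▸ Nat.card_eq_fintype_card (α := V) ▸ Set.ncard_le_card A
  have hcard : Nat.card {i : Fin n // i ∈ e '' A} = Nat.card {i : Fin n // i.val < A.ncard} := by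
    have h1 : Nat.card {i : Fin n // i ∈ e '' A} = A.ncard := by
      rw [← Set.ncard_image_of_injective A e.injective]
      rfl
    rw [h1, Nat.card_congr (Fin.castLEquiv hk).symm]
    simp
  obtain ⟨g⟩ := Finite.card_eq.mp hcard
  exact ⟨e.trans g.extendSubtype, fun a ha =>
    g.extendSubtype_mem (e a) (Set.mem_image_of_mem e ha)⟩

end LongestCycle

/-- Let `G` be a 2-connected non-Hamiltonian graph on `n` vertices, `C` a longest cycle of
even length `c`, and `u` an isolated vertex of `G - C` with exactly `c/2` neighbours on
`C`. Then `G` is a subgraph of `W_{n, c/2, c}`. -/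
theorem stmt12 {V : Type*} [Fintype V] (G : SimpleGraph V) (n c : ℕ)
    (hn : Fintype.card V = n) (hG : TwoConnected G)
    (v0 : V) (p : G.Walk v0 v0) (hC : IsLongestCycle G p) (hc : p.length = c)
    (heven : Even c) (hnonham : c < n)
    (u : V) (hu : u ∉ p.support) (huiso : ∀ w : V, G.Adj u w → w ∈ p.support)
    (hdeg : {w : V | w ∈ p.support ∧ G.Adj u w}.ncard = c / 2) :
    ∃ f : V → Fin n, Function.Injective f ∧
      ∀ a b : V, G.Adj a b → (Wgraph n (c / 2) c).Adj (f a) (f b) := by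
  subst hc
  have hv := hC.longestCycleEnum
  simp only [← hC.mem_range_iff] at hu huiso hdeg
  have halt := hv.adj_or_adj_succ hu heven hdeg
  obtain ⟨f, hf⟩ := exists_equiv_fin_forall_mem hn
    {w | w ∈ Set.range (fun i => p.getVert (i % p.length)) ∧ G.Adj u w}
  rw [hdeg] at hf
  refine ⟨f, f.injective, fun a b hab => ?_⟩
  rw [Wgraph, SimpleGraph.fromRel_adj]
  refine ⟨f.injective.ne hab.ne, .inl (.inr ?_)⟩
  exact (hv.adj_or_adj_of_adj hG hu huiso halt hab).imp
    (fun h => hf a ⟨huiso a h, h⟩) (fun h => hf b ⟨huiso b h, h⟩)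
end

section
/- Let G be a graph, C a cycle in G, and R a connected component of G - C with a vertex set disjoint from C. Suppose C is a longest cycle in G, T = {u_1,...,u_t} ⊆ N_C(R) is a strong attachment of R to C with t ≥ 2, and S = N_C(R) \ T with |S| = s. Then the length c of C satisfies c ≥ Σ_{i=1}^{t} d*_R(u_i, u_{i+1}) + 2s, where indices are cyclic and d*_R(x,y) is the maximum length of an (x,y)-path with all internal vertices in R. -/
open SimpleGraph

/-- `u : Fin t → V` is a strong attachment of `R` to the cycle `p`: its values lie on the
cycle in cyclic order, and each (cyclically) consecutive pair `u i, u (i+1)` admits a pair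
of independent edges into `R`. -/
def IsStrongAttachment {V : Type*} (G : SimpleGraph V) {v0 : V} (p : G.Walk v0 v0)
    (R : Set V) {t : ℕ} [NeZero t] (u : Fin t → V) : Prop :=
  (∃ idx : Fin t → ℕ, StrictMono idx ∧
      ∀ i : Fin t, idx i < p.length ∧ p.getVert (idx i) = u i) ∧
  ∀ i : Fin t, ∃ y z, y ∈ R ∧ z ∈ R ∧ G.Adj (u i) y ∧ G.Adj (u (i + 1)) z ∧
    y ≠ z ∧ u i ≠ u (i + 1)

/-- `x` and `y` are joined by a path of length at least `l` with all internal vertices in `R`. -/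
def HasLink {V : Type*} (G : SimpleGraph V) (R : Set V) (x y : V) (l : ℕ) : Prop :=
  ∃ P : G.Walk x y, P.IsPath ∧ l ≤ P.length ∧ ∀ w ∈ P.support, w ≠ x → w ≠ y → w ∈ R

section Link

variable {V : Type*} {G : SimpleGraph V} {R : Set V} {x y z : V} {l : ℕ}

theorem HasLink.symm (h : HasLink G R x y l) : HasLink G R y x l := by
  obtain ⟨P, hP, hl, hi⟩ := h
  exact ⟨P.reverse, hP.reverse, by simpa using hl,
    fun w hw hy hx => hi w (by simpa using hw) hx hy⟩

theorem HasLink.mono {R' : Set V} {l' : ℕ} (h : HasLink G R x y l) (hR : R ⊆ R')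
    (hl : l' ≤ l) : HasLink G R' x y l' := by
  obtain ⟨P, hP, hlP, hi⟩ := h
  exact ⟨P, hP, hl.trans hlP, fun w hw hx hy => hR (hi w hw hx hy)⟩

theorem HasLink.cons (h : HasLink G R x y l) (hx : x ∈ R) (hadj : G.Adj z x)
    (hzR : z ∉ R) (hzy : z ≠ y) : HasLink G R z y (l + 1) := by
  obtain ⟨P, hP, hl, hi⟩ := h
  have hzx : z ≠ x := hadj.ne
  refine ⟨Walk.cons hadj P, hP.cons fun hz => hzR (hi z hz hzx hzy), by simpa using hl, ?_⟩
  intro w hw hwz hwy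
  by_cases hwx : w = x
  · exact hwx ▸ hx
  · refine hi w ?_ hwx hwy
    simpa [hwz] using hw

theorem hasLink_of_induce_connected (hR : (G.induce R).Connected) (hx : x ∈ R) (hy : y ∈ R) :
    HasLink G R x y 0 := by
  obtain ⟨P, hP⟩ := hR.exists_isPath ⟨x, hx⟩ ⟨y, hy⟩
  refine ⟨P.map (Embedding.induce R).toHom, hP.map (Embedding.induce (G := G) R).injective,
    by simp, ?_⟩
  intro w hw _ _
  obtain ⟨v, _, rfl⟩ := List.mem_map.1
    (Walk.support_map (Embedding.induce (G := G) R).toHom P ▸ hw)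
  exact v.2

theorem hasLink_two_of_adj (hR : (G.induce R).Connected) (hxR : x ∉ R) (hyR : y ∉ R)
    (hxy : x ≠ y) (hx : ∃ r ∈ R, G.Adj x r) (hy : ∃ r ∈ R, G.Adj y r) : HasLink G R x y 2 := by
  obtain ⟨r, hr, hxr⟩ := hx
  obtain ⟨r', hr', hyr⟩ := hy
  have h := (hasLink_of_induce_connected hR hr hr').cons hr hxr hxR (by rintro rfl; exact hxR hr')
  exact (h.symm.cons hr' hyr hyR hxy.symm).symm

/-- Any two vertices of a path are linked inside the interior of the path. -/
theorem SimpleGraph.Walk.IsPath.hasLink_getVert {P : G.Walk x y} (hP : P.IsPath) {i j : ℕ}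
    (hij : i ≤ j) (hj : j ≤ P.length) :
    HasLink G {w | w ∈ P.support ∧ w ≠ x ∧ w ≠ y} (P.getVert i) (P.getVert j) (j - i) := by
  have hend : (P.drop i).getVert (j - i) = P.getVert j := by
    rw [Walk.drop_getVert]; congr 1; omega
  refine ⟨((P.drop i).take (j - i)).copy rfl hend, ?_, ?_, ?_⟩
  · rw [Walk.isPath_copy]
    exact (hP.drop i).take _
  · simp only [Walk.length_copy, Walk.take_length, Walk.drop_length]
    omega
  · intro w hw hwi hwj
    rw [Walk.support_copy, Walk.mem_support_iff_exists_getVert] at hw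
    obtain ⟨k, rfl, hk⟩ := hw
    simp only [Walk.take_length, Walk.drop_length, le_inf_iff] at hk
    rw [Walk.take_getVert, Walk.drop_getVert, min_eq_right hk.1] at hwi hwj ⊢
    refine ⟨Walk.getVert_mem_support _ _, fun h => hwi ?_, fun h => hwj ?_⟩
    · have := (hP.getVert_eq_start_iff (by omega)).1 h
      congr 1; omega
    · have := (hP.getVert_eq_end_iff (by omega)).1 h
      congr 1; omega

/-- A path through the connected set `R` gives a labelling of `R` that is realised by links:
it extends the position function of the path. -/
theorem exists_link_labelling [Finite V] (hR : (G.induce R).Connected)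
    (hxR : x ∉ R) (hyR : y ∉ R) (hl : 2 ≤ l) (h : HasLink G R x y l) :
    ∃ α : V → ℕ, α x = 0 ∧ l ≤ α y ∧
      ∀ w ∈ R ∪ {x, y}, ∀ w' ∈ R ∪ {x, y}, HasLink G R w w' (α w - α w') := by
  classical
  obtain ⟨P, hP, hlP, hi⟩ := h
  let 𝒜 : Set (Set V) := {A | {w | w ∈ P.support ∧ w ≠ x ∧ w ≠ y} ⊆ A ∧ A ⊆ R ∧
    ∃ α : V → ℕ, α x = 0 ∧ l ≤ α y ∧
      ∀ w ∈ A ∪ {x, y}, ∀ w' ∈ A ∪ {x, y}, HasLink G A w w' (α w - α w')}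
  have hne : 𝒜.Nonempty := by
    refine ⟨_, subset_rfl, fun w hw => hi w hw.1 hw.2.1 hw.2.2, fun w => P.support.idxOf w,
      ?_, ?_, ?_⟩
    · cases P <;> simp
    · have h1 := P.getVert_support_idxOf P.end_mem_support
      have h2 := List.idxOf_lt_length_of_mem P.end_mem_support
      rw [Walk.length_support] at h2
      exact hlP.trans_eq ((hP.getVert_eq_end_iff (by omega)).1 h1).symm
    · have hmem : ∀ w ∈ {w | w ∈ P.support ∧ w ≠ x ∧ w ≠ y} ∪ {x, y}, w ∈ P.support := by
        rintro w (hw | rfl | rfl)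
        · exact hw.1
        · exact P.start_mem_support
        · exact P.end_mem_support
      intro w hw w' hw'
      replace hw := hmem w hw
      replace hw' := hmem w' hw'
      have h1 := List.idxOf_lt_length_of_mem hw
      have h2 := List.idxOf_lt_length_of_mem hw'
      rw [Walk.length_support] at h1 h2
      rcases le_total (P.support.idxOf w) (P.support.idxOf w') with hle | hle
      · have := hP.hasLink_getVert hle (by omega)
        rw [P.getVert_support_idxOf hw, P.getVert_support_idxOf hw'] at this
        exact this.mono subset_rfl (by rw [Nat.sub_eq_zero_of_le hle]; exact Nat.zero_le _)
      · have := hP.hasLink_getVert hle (by omega)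
        rw [P.getVert_support_idxOf hw, P.getVert_support_idxOf hw'] at this
        exact this.symm
  obtain ⟨A, ⟨hPA, hAR, α, hαx, hαy, hα⟩, hmax⟩ := (Set.toFinite 𝒜).exists_maximal hne
  suffices hRA : R ⊆ A by
    obtain rfl := hAR.antisymm hRA
    exact ⟨α, hαx, hαy, hα⟩
  intro r hr
  by_contra hrA
  have h1A : P.getVert 1 ∈ A := by
    refine hPA ⟨Walk.getVert_mem_support _ _, fun h => ?_, fun h => ?_⟩
    · have := (hP.getVert_eq_start_iff (by omega)).1 h
      omega
    · have := (hP.getVert_eq_end_iff (by omega)).1 h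
      omega
  obtain ⟨W⟩ := hR.preconnected ⟨_, hAR h1A⟩ ⟨r, hr⟩
  obtain ⟨e, -, hv, hz⟩ := W.exists_boundary_dart {w | (w : V) ∈ A} h1A hrA
  have hadj : G.Adj (e.snd : V) e.fst := e.adj.symm
  have hzR : (e.snd : V) ∈ R := e.snd.2
  generalize (e.fst : R) = v at *
  generalize (e.snd : R) = z at *
  obtain ⟨v, hvR⟩ := v
  obtain ⟨z, hzR'⟩ := z
  simp only [Set.mem_ofPred_eq] at hv hz hadj hzR
  have hzx : x ≠ z := by rintro rfl; exact hxR hzR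
  have hzy : y ≠ z := by rintro rfl; exact hyR hzR
  have hsub : A ⊆ insert z A := Set.subset_insert _ _
  refine hz (hmax ?_ hsub (Set.mem_insert z A))
  refine ⟨hPA.trans hsub, Set.insert_subset hzR hAR, Function.update α z (α v), ?_, ?_, ?_⟩
  · rwa [Function.update_of_ne hzx]
  · rwa [Function.update_of_ne hzy]
  · have hvA : v ∈ A ∪ {x, y} := Or.inl hv
    have hold : ∀ w ∈ insert z A ∪ {x, y}, w ≠ z → w ∈ A ∪ {x, y} := by
      rintro w ((rfl | hw) | hw) hwz
      · exact absurd rfl hwz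
      · exact Or.inl hw
      · exact Or.inr hw
    intro w hw w' hw'
    by_cases hwz : w = z <;> by_cases hwz' : w' = z
    · subst hwz hwz'
      exact ⟨Walk.nil, by simp, by simp, by simp⟩
    · subst hwz
      rw [Function.update_self, Function.update_of_ne hwz']
      exact ((hα v hvA w' (hold w' hw' hwz')).cons hv hadj hz (Ne.symm hwz')).mono hsub
        (Nat.le_succ _)
    · subst hwz'
      rw [Function.update_self, Function.update_of_ne hwz]
      exact ((hα w (hold w hw hwz) v hvA).symm.cons hv hadj hz (Ne.symm hwz)).symm.mono hsub
        (Nat.le_succ _)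
    · rw [Function.update_of_ne hwz, Function.update_of_ne hwz']
      exact (hα w (hold w hw hwz) w' (hold w' hw' hwz')).mono hsub le_rfl

end Link

section Exchange

variable {V : Type*} {G : SimpleGraph V}

theorem SimpleGraph.Walk.exists_eq_append_of_getVert {u v x : V} (p : G.Walk u v) {n : ℕ}
    (hn : n ≤ p.length) (hx : p.getVert n = x) :
    ∃ (q : G.Walk u x) (r : G.Walk x v), p = q.append r ∧ q.length = n := by
  subst hx
  exact ⟨p.take n, p.drop n, (p.append_take_drop_eq n).symm, by simpa using hn⟩

theorem SimpleGraph.Walk.IsCycle.append_comm {u v : V} {p : G.Walk u v} {q : G.Walk v u}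
    (h : (p.append q).IsCycle) : (q.append p).IsCycle := by
  rw [Walk.isCycle_def] at h ⊢
  refine ⟨?_, ?_, ?_⟩
  · have := h.1
    rw [Walk.isTrail_def, Walk.edges_append] at this ⊢
    exact List.perm_append_comm.nodup_iff.1 this
  · intro h0
    apply h.2.1
    have := congrArg Walk.length h0
    rw [Walk.eq_nil_iff_nil, ← Walk.length_eq_zero_iff]
    simp only [Walk.length_append, Walk.length_nil] at this ⊢
    omega
  · have := h.2.2
    rw [Walk.tail_support_append] at this ⊢
    exact List.perm_append_comm.nodup_iff.1 this

variable {R : Set V} {v₀ : V} {p : G.Walk v₀ v₀}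

theorem IsLongestCycle.add_length_le (hC : IsLongestCycle G p) {x y : V} (hxy : x ≠ y)
    {l : ℕ} (h : HasLink G R x y l) (W : G.Walk y x) (hW : W.IsPath)
    (hWR : ∀ w ∈ W.support, w ∉ R) (hl : 1 < l) : l + W.length ≤ p.length := by
  obtain ⟨Q, hQ, hlQ, hi⟩ := h
  have hcyc : (Q.append W).IsCycle := by
    refine hQ.isCycle_append hW ?_ (Or.inl (by omega))
    rw [List.disjoint_left]
    intro w hwQ hwW
    have hwx : w ≠ x := by
      rintro rfl
      have := Q.isPath_def.1 hQ
      rw [← Q.cons_tail_support, List.nodup_cons] at this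
      exact this.1 hwQ
    have hwy : w ≠ y := by
      rintro rfl
      have := W.isPath_def.1 hW
      rw [← W.cons_tail_support, List.nodup_cons] at this
      exact this.1 hwW
    exact hWR w (List.mem_of_mem_tail hwW) (hi w (List.mem_of_mem_tail hwQ) hwx hwy)
  have := hC.2 _ _ hcyc
  rw [Walk.length_append] at this
  omega

/-- A link between two vertices of a longest cycle is no longer than either arc. -/
theorem IsLongestCycle.link_le_arcs (hC : IsLongestCycle G p)
    (hdis : Disjoint R {x | x ∈ p.support}) {i j l : ℕ} (hij : i < j) (hj : j < p.length)
    (h : HasLink G R (p.getVert i) (p.getVert j) l) : l ≤ j - i ∧ l + (j - i) ≤ p.length := by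
  rcases Nat.lt_or_ge 1 l with hl | hl
  swap
  · omega
  have hne : p.getVert i ≠ p.getVert j := fun he => by
    have := hC.1.getVert_injOn' (show i ≤ p.length - 1 by omega) (show j ≤ p.length - 1 by omega) he
    omega
  have hpR : ∀ w ∈ p.support, w ∉ R := fun w hw hwR => Set.disjoint_left.1 hdis hwR hw
  obtain ⟨q, Z, hqZ, hq⟩ := p.exists_eq_append_of_getVert hj.le rfl
  have hqi : q.getVert i = p.getVert i := by
    conv_rhs => rw [hqZ]
    rw [Walk.getVert_append, if_pos (by omega)]
  obtain ⟨X, Y, hXY, hX⟩ := q.exists_eq_append_of_getVert (by omega) hqi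
  have hlen : p.length = X.length + Y.length + Z.length := by
    conv_lhs => rw [hqZ, hXY]
    simp
  have hYl : X.length + Y.length = j := by
    simpa [hXY] using hq
  have hmem : ∀ w, w ∈ X.support ∨ w ∈ Y.support ∨ w ∈ Z.support → w ∈ p.support := by
    intro w hw
    rw [hqZ, hXY, Walk.mem_support_append_iff, Walk.mem_support_append_iff]
    tauto
  have hcyc : (Y.append (Z.append X)).IsCycle := by
    have h1 : (X.append (Y.append Z)).IsCycle := by
      rw [Walk.append_assoc, ← hXY, ← hqZ]
      exact hC.1
    have h2 := h1.append_comm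
    rwa [← Walk.append_assoc] at h2
  have hYnil : ¬ Y.Nil := by
    rw [← Walk.length_eq_zero_iff]; omega
  have hZXnil : ¬ (Z.append X).Nil := by
    rw [← Walk.length_eq_zero_iff, Walk.length_append]; omega
  have h1 := hC.add_length_le hne h (Z.append X) (hcyc.isPath_of_append_right hYnil) (fun w hw => by
    rw [Walk.mem_support_append_iff] at hw
    exact hpR w (hmem w (by tauto))) hl
  have h2 := hC.add_length_le hne.symm h.symm Y (hcyc.isPath_of_append_left hZXnil)
    (fun w hw => hpR w (hmem w (by tauto))) hl
  rw [Walk.length_append] at h1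
  omega

/-- Cyclic version of `IsLongestCycle.link_le_arcs`. -/
theorem IsLongestCycle.link_le_mod (hC : IsLongestCycle G p)
    (hdis : Disjoint R {x | x ∈ p.support}) {i j l : ℕ} (hij : i < j) (hj : j < i + p.length)
    (h : HasLink G R (p.getVert (i % p.length)) (p.getVert (j % p.length)) l) : l ≤ j - i := by
  have hn : 0 < p.length := by omega
  have hi := Nat.mod_lt i hn
  have hi' := Nat.mod_add_div i p.length
  have hjn : j % p.length = (i % p.length + (j - i)) % p.length := by
    rw [Nat.mod_add_mod]; congr 1; omega
  rcases Nat.lt_or_ge (i % p.length + (j - i)) p.length with hlt | hge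
  · rw [Nat.mod_eq_of_lt hlt] at hjn
    have := hC.link_le_arcs hdis (by omega) (by omega) h
    omega
  · rw [Nat.mod_eq_sub_mod hge] at hjn
    rw [Nat.mod_eq_of_lt (show i % p.length + (j - i) - p.length < p.length by omega)] at hjn
    have := hC.link_le_arcs hdis (by omega) (by omega) h.symm
    omega

theorem IsLongestCycle.getVert_mod_ne (hC : IsLongestCycle G p) {i j : ℕ} (hij : i < j)
    (hj : j < i + p.length) : p.getVert (i % p.length) ≠ p.getVert (j % p.length) := by
  intro he
  have hn : 0 < p.length := by omega
  have hi := Nat.mod_lt i hn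
  have hj' := Nat.mod_lt j hn
  have h := hC.1.getVert_injOn' (show i % p.length ≤ p.length - 1 by omega)
    (show j % p.length ≤ p.length - 1 by omega) he
  have := (Nat.modEq_iff_dvd' hij.le).1 h
  have := Nat.le_of_dvd (by omega) this
  omega

end Exchange

/-- If the marked points of an open interval are far apart compared with their labels, then each
of them lengthens the interval by two. -/
theorem add_two_mul_card_le_of_gaps (N : ℕ → Prop) [DecidablePred N] (α : ℕ → ℕ) {a b d : ℕ}
    (hab : d ≤ b - a)
    (hleft : ∀ m, a < m → m < b → N m → α m + 1 ≤ m - a)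
    (hright : ∀ m, a < m → m < b → N m → d - α m + 1 ≤ b - m)
    (hmid : ∀ m m', a < m → m < m' → m' < b → N m → N m' → α m' - α m + 2 ≤ m' - m) :
    d + 2 * ((Finset.Ioo a b).filter N).card ≤ b - a := by
  have hsplit : ∀ m, (∀ m', a < m' → m' < m → ¬ N m') ∨
      ∃ m', a < m' ∧ m' < m ∧ N m' ∧
        ((Finset.Ioo a m).filter N).card = ((Finset.Ioo a m').filter N).card + 1 := by
    intro m
    by_cases hne : ((Finset.Ioo a m).filter N).Nonempty
    · right
      have hk := Finset.max'_mem _ hne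
      have hkmax : ∀ c ∈ (Finset.Ioo a m).filter N, c ≤ ((Finset.Ioo a m).filter N).max' hne :=
        fun c hc => Finset.le_max' _ c hc
      generalize ((Finset.Ioo a m).filter N).max' hne = k at hk hkmax
      simp only [Finset.mem_filter, Finset.mem_Ioo] at hk hkmax
      refine ⟨k, hk.1.1, hk.1.2, hk.2, ?_⟩
      rw [← Finset.card_insert_of_notMem (a := k) (by simp)]
      congr 1
      ext c
      simp only [Finset.mem_filter, Finset.mem_Ioo, Finset.mem_insert]
      constructor
      · intro hc
        have := hkmax c hc
        rcases this.lt_or_eq with h | h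
        · exact Or.inr ⟨⟨hc.1.1, h⟩, hc.2⟩
        · exact Or.inl h
      · rintro (rfl | hc)
        · exact hk
        · exact ⟨⟨hc.1.1, hc.1.2.trans hk.1.2⟩, hc.2⟩
    · left
      intro m' h1 h2 h3
      exact hne ⟨m', by simp [h1, h2, h3]⟩
  have hempty : ∀ m, (∀ m', a < m' → m' < m → ¬ N m') →
      ((Finset.Ioo a m).filter N).card = 0 := by
    intro m h
    rw [Finset.card_eq_zero, Finset.filter_eq_empty_iff]
    intro c hc
    rw [Finset.mem_Ioo] at hc
    exact h c hc.1 hc.2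
  have hstep : ∀ m, a < m → m < b → N m →
      α m + 1 + 2 * ((Finset.Ioo a m).filter N).card ≤ m - a := by
    intro m
    induction m using Nat.strong_induction_on with
    | _ m ih =>
      intro ham hmb hm
      rcases hsplit m with h | ⟨m', h1, h2, h3, h4⟩
      · rw [hempty m h]
        exact hleft m ham hmb hm
      · have := ih m' h2 h1 (h2.trans hmb) h3
        have := hmid m' m h1 h2 hmb h3 hm
        omega
  rcases hsplit b with h | ⟨m, h1, h2, h3, h4⟩
  · rw [hempty b h]
    exact hab
  · have := hstep m h1 h2 h3
    have := hright m h1 h2 h3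
    omega

/-- An arc of a longest cycle between two attachments of a component `R` has length at least that
of any link between its ends plus twice the number of attachments inside the arc. -/
theorem IsLongestCycle.link_add_two_mul_card_le {V : Type*} [Finite V] {G : SimpleGraph V}
    {R : Set V} {v₀ : V} {p : G.Walk v₀ v₀}
    [DecidablePred fun m : ℕ => ∃ r ∈ R, G.Adj (p.getVert (m % p.length)) r]
    (hC : IsLongestCycle G p) (hdis : Disjoint R {x | x ∈ p.support}) (hR : (G.induce R).Connected)
    {a b d : ℕ} (hab : a < b) (hba : b < a + p.length)
    (ha : ∃ r ∈ R, G.Adj (p.getVert (a % p.length)) r)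
    (hb : ∃ r ∈ R, G.Adj (p.getVert (b % p.length)) r)
    (h : HasLink G R (p.getVert (a % p.length)) (p.getVert (b % p.length)) d) :
    d + 2 * ((Finset.Ioo a b).filter
      fun m => ∃ r ∈ R, G.Adj (p.getVert (m % p.length)) r).card ≤ b - a := by
  have hpR : ∀ m, p.getVert m ∉ R := fun m hm =>
    Set.disjoint_left.1 hdis hm (Walk.getVert_mem_support _ _)
  have hne := hC.getVert_mod_ne hab hba
  obtain ⟨l, hl2, hdl, hl⟩ : ∃ l, 2 ≤ l ∧ d ≤ l ∧
      HasLink G R (p.getVert (a % p.length)) (p.getVert (b % p.length)) l := by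
    rcases Nat.lt_or_ge d 2 with hd | hd
    · exact ⟨2, le_rfl, hd.le, hasLink_two_of_adj hR (hpR _) (hpR _) hne ha hb⟩
    · exact ⟨d, hd, le_rfl, h⟩
  obtain ⟨α, hα0, hαl, hα⟩ := exists_link_labelling hR (hpR _) (hpR _) hl2 hl
  have hnb : ∀ m, ∃ r, (∃ r ∈ R, G.Adj (p.getVert (m % p.length)) r) →
      r ∈ R ∧ G.Adj (p.getVert (m % p.length)) r := by
    intro m
    by_cases hm : ∃ r ∈ R, G.Adj (p.getVert (m % p.length)) r
    · obtain ⟨r, hr⟩ := hm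
      exact ⟨r, fun _ => hr⟩
    · exact ⟨v₀, fun h => absurd h hm⟩
  choose r hr using hnb
  refine add_two_mul_card_le_of_gaps _ (fun m => α (r m))
    (hC.link_le_mod hdis hab hba (hl.mono subset_rfl hdl)) ?_ ?_ ?_
  · intro m ham hmb hm
    obtain ⟨hrR, hadj⟩ := hr m hm
    refine hC.link_le_mod hdis ham (by omega) (HasLink.symm ?_)
    have := (hα (r m) (Or.inl hrR) _ (Or.inr (Or.inl rfl))).cons hrR hadj (hpR _)
      (hC.getVert_mod_ne ham (by omega)).symm
    exact this.mono subset_rfl (by omega)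
  · intro m ham hmb hm
    obtain ⟨hrR, hadj⟩ := hr m hm
    refine hC.link_le_mod hdis hmb (by omega) ?_
    have := (hα _ (Or.inr (Or.inr rfl)) (r m) (Or.inl hrR)).symm.cons hrR hadj (hpR _)
      (hC.getVert_mod_ne hmb (by omega))
    exact this.mono subset_rfl (by omega)
  · intro m m' ham hmm hmb hm hm'
    obtain ⟨hrR, hadj⟩ := hr m hm
    obtain ⟨hrR', hadj'⟩ := hr m' hm'
    refine hC.link_le_mod hdis hmm (by omega) ?_
    have h1 := (hα (r m') (Or.inl hrR') (r m) (Or.inl hrR)).cons hrR' hadj' (hpR _)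
      (by intro he; exact hpR _ (he ▸ hrR))
    exact h1.symm.cons hrR hadj (hpR _) (hC.getVert_mod_ne hmm (by omega))

/-- Fan's lemma (iii): if `C` is a longest cycle, `T = {u_1,…,u_t}` (`t ≥ 2`) a strong
attachment of a component `R` of `G - C`, and `S = N_C(R) \ T` has size `s`, then
`c ≥ Σᵢ d*_R(u_i, u_{i+1}) + 2s`, where `d*_R` is the maximum length of a path with all
internal vertices in `R`. -/
theorem stmt13 {V : Type*} [Fintype V] (G : SimpleGraph V)
    (v0 : V) (p : G.Walk v0 v0) (hC : IsLongestCycle G p) (R : Set V)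
    (hR : IsCompOutside G {x | x ∈ p.support} R)
    (t : ℕ) [NeZero t] (ht : 2 ≤ t) (u : Fin t → V) (hinj : Function.Injective u)
    (hT : ∀ i : Fin t, u i ∈ p.support ∧ ∃ r ∈ R, G.Adj (u i) r)
    (hSA : IsStrongAttachment G p R u)
    (s : ℕ)
    (hs : ({x : V | x ∈ p.support ∧ ∃ r ∈ R, G.Adj x r} \ Set.range u).ncard = s)
    (d : Fin t → ℕ)
    (hd : ∀ i : Fin t, ∃ P : G.Walk (u i) (u (i + 1)), P.IsPath ∧ P.length = d i ∧
      ∀ w ∈ P.support, w ≠ u i → w ≠ u (i + 1) → w ∈ R) :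
    (∑ i : Fin t, d i) + 2 * s ≤ p.length := by
  classical
  obtain ⟨⟨idx, hmono, hidx⟩, -⟩ := hSA
  have hn : 0 < p.length := by have := (hidx 0).1; omega
  have ht0 : 0 < t := by omega
  -- The positions of the attachment, continued by one full turn.
  let a : ℕ → ℕ := fun j => if h : j < t then idx ⟨j, h⟩ else idx 0 + p.length
  have ha_lt : ∀ j (h : j < t), a j = idx ⟨j, h⟩ := fun j h => dif_pos h
  have ha_t : a t = a 0 + p.length := by
    rw [ha_lt 0 ht0]
    exact dif_neg (lt_irrefl t)
  clear_value a
  have ha_step : ∀ j < t, a j < a (j + 1) ∧ a (j + 1) < a j + p.length := by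
    intro j hj
    have h0j : a 0 ≤ a j := by
      rw [ha_lt 0 ht0, ha_lt j hj]
      exact hmono.monotone (Nat.zero_le j)
    have hjn : a j < p.length := ha_lt j hj ▸ (hidx _).1
    rcases Nat.lt_or_ge (j + 1) t with h | h
    · have h1 : a j < a (j + 1) := by
        rw [ha_lt _ h, ha_lt j hj]
        exact hmono (Nat.lt_succ_self j)
      have h2 : a (j + 1) < p.length := ha_lt _ h ▸ (hidx _).1
      omega
    · obtain rfl : t = j + 1 := by omega
      have h1 : a 0 < a j := by
        rw [ha_lt 0 ht0, ha_lt j hj]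
        exact hmono (show 0 < j by omega)
      omega
  have hfa : ∀ i : Fin t, p.getVert (a i % p.length) = u i := by
    intro i
    rw [ha_lt i i.2, Nat.mod_eq_of_lt (hidx _).1, (hidx _).2]
  have hfa' : ∀ i : Fin t, p.getVert (a (i + 1) % p.length) = u (i + 1) := by
    intro i
    rcases Nat.lt_or_ge (i.1 + 1) t with h | h
    · rw [← hfa (i + 1), Fin.val_add_one_of_lt' h]
    · have hit : i.1 + 1 = t := by omega
      have hi0 : i + 1 = 0 := by
        ext
        rw [Fin.val_add, Fin.val_one', Nat.add_mod_mod, hit]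
        simp
      rw [hit, ha_t, Nat.add_mod_right, hi0, ← hfa 0]
      rfl
  let F : ℕ → Finset ℕ := fun j => (Finset.Ioo (a j) (a (j + 1))).filter
    fun m => ∃ r ∈ R, G.Adj (p.getVert (m % p.length)) r
  have harc : ∀ i : Fin t, d i + 2 * (F i).card ≤ a (i + 1) - a i := by
    intro i
    obtain ⟨P, hP, hPd, hPR⟩ := hd i
    have hlink : HasLink G R (p.getVert (a i % p.length)) (p.getVert (a (i + 1) % p.length))
        (d i) := by
      rw [hfa, hfa']
      exact ⟨P, hP, hPd.ge, hPR⟩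
    have hadj := (hT i).2
    have hadj' := (hT (i + 1)).2
    rw [← hfa] at hadj
    rw [← hfa'] at hadj'
    exact hC.link_add_two_mul_card_le hR.2.1 hR.2.2.1 (ha_step i i.2).1 (ha_step i i.2).2
      hadj hadj' hlink
  have htotal : ∑ i : Fin t, (a (i + 1) - a i) = p.length := by
    rw [Fin.sum_univ_eq_sum_range (fun j => a (j + 1) - a j) t]
    have htel : ∀ k ≤ t, ∑ j ∈ Finset.range k, (a (j + 1) - a j) + a 0 = a k := by
      intro k
      induction k with
      | zero => simp
      | succ k ih =>
        intro hk
        have := ih (by omega)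
        have := (ha_step k (by omega)).1
        rw [Finset.sum_range_succ]
        omega
    have := htel t le_rfl
    omega
  have hcover : s ≤ ∑ i : Fin t, (F i).card := by
    have hsub : {x : V | x ∈ p.support ∧ ∃ r ∈ R, G.Adj x r} \ Set.range u ⊆
        ((Finset.univ.biUnion fun i : Fin t => F i).image
          fun m => p.getVert (m % p.length) : Finset V) := by
      rintro x ⟨⟨hx, hxR⟩, hxu⟩
      obtain ⟨k, hk0, hkt, rfl⟩ :
          ∃ k, a 0 ≤ k ∧ k < a t ∧ p.getVert (k % p.length) = x := by
        obtain ⟨k, rfl, hk⟩ := Walk.mem_support_iff_exists_getVert.1 hx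
        have ha0 : a 0 < p.length := ha_lt 0 ht0 ▸ (hidx _).1
        have hkm : p.getVert (k % p.length) = p.getVert k := by
          rcases hk.lt_or_eq with h | h
          · rw [Nat.mod_eq_of_lt h]
          · rw [h, Nat.mod_self, Walk.getVert_zero, Walk.getVert_length]
        have hml := Nat.mod_lt k hn
        rcases Nat.lt_or_ge (k % p.length) (a 0) with h | h
        · exact ⟨k % p.length + p.length, by omega, by omega, by simpa using hkm⟩
        · exact ⟨k % p.length, h, by omega, by simpa using hkm⟩
      have hex : ∃ j, k < a (j + 1) := ⟨t - 1, by rwa [Nat.sub_add_cancel ht0]⟩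
      have hj : Nat.find hex < t := by
        have := Nat.find_min' hex (m := t - 1) (by rwa [Nat.sub_add_cancel ht0])
        omega
      have hlow : a (Nat.find hex) ≤ k := by
        rcases Nat.eq_zero_or_pos (Nat.find hex) with h | h
        · rwa [h]
        · have := Nat.find_min hex (m := Nat.find hex - 1) (by omega)
          rw [Nat.sub_add_cancel h] at this
          omega
      have hhigh := Nat.find_spec hex
      generalize Nat.find hex = j at hj hlow hhigh
      have hjk : a j ≠ k := by
        rintro rfl
        exact hxu ⟨⟨j, hj⟩, (hfa ⟨j, hj⟩).symm⟩
      rw [Finset.coe_image]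
      refine ⟨k, ?_, rfl⟩
      rw [Finset.mem_coe, Finset.mem_biUnion]
      exact ⟨⟨j, hj⟩, Finset.mem_univ _, Finset.mem_filter.2
        ⟨Finset.mem_Ioo.2 ⟨lt_of_le_of_ne hlow hjk, hhigh⟩, hxR⟩⟩
    calc s ≤ _ := hs ▸ Set.ncard_le_ncard hsub (Finset.finite_toSet _)
      _ = _ := Set.ncard_coe_finset _
      _ ≤ _ := Finset.card_image_le
      _ ≤ _ := Finset.card_biUnion_le
  calc (∑ i : Fin t, d i) + 2 * s
      ≤ ∑ i : Fin t, (d i + 2 * (F i).card) := by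
        rw [Finset.sum_add_distrib, ← Finset.mul_sum]
        omega
    _ ≤ ∑ i : Fin t, (a (i + 1) - a i) := Finset.sum_le_sum fun i _ => harc i
    _ = p.length := htotal
end

section
/- Let G be a 2-connected graph, C a locally maximal cycle of G of length |C|, R a component of G - C, and T a strong attachment of R to C with |T| = t. Suppose that for every pair x, x' ∈ T the longest (x,x')-path with all internal vertices in R has length at least d, where d ≥ 2. Then the clique number of the subgraph of G induced on V(C) is at most |C| - (d-1)(t-1). -/
open SimpleGraph

/-- An edge (of `Sym2 V`) crossing between `Cs` and its complement: it has an endpoint in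
`Cs` and an endpoint outside `Cs`. -/
def crossEdge {V : Type*} (Cs : Set V) (e : Sym2 V) : Prop :=
  (∃ a ∈ e, a ∈ Cs) ∧ (∃ b ∈ e, b ∉ Cs)

open Classical in
/-- The number of edges in the list `l` having exactly one endpoint in `Cs`. -/
noncomputable def crossCount {V : Type*} (Cs : Set V) (l : List (Sym2 V)) : ℕ :=
  l.countP (fun e => decide (crossEdge Cs e))

/-- The cycle `p` is locally maximal in `G`: there is no cycle `q` with `|E(q)| > |E(p)|`
using at most two edges with exactly one endpoint on `p`. -/
def IsLocallyMaximal {V : Type*} (G : SimpleGraph V) {v0 : V} (p : G.Walk v0 v0) : Prop :=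
  p.IsCycle ∧ ∀ (w : V) (q : G.Walk w w), q.IsCycle →
    ¬ (p.length < q.length ∧ crossCount {x | x ∈ p.support} q.edges ≤ 2)

namespace SimpleGraph

variable {V : Type*} {G : SimpleGraph V}

/-- An injective sequence of consecutively adjacent vertices is a path. -/
theorem exists_isPath_of_seq (f : ℕ → V) (l : ℕ) (hadj : ∀ k < l, G.Adj (f k) (f (k + 1)))
    (hinj : Set.InjOn f {k | k ≤ l}) :
    ∃ q : G.Walk (f 0) (f l), q.IsPath ∧ q.length = l ∧ ∀ w ∈ q.support, ∃ k ≤ l, w = f k := by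
  induction l with
  | zero => exact ⟨.nil, by simp, rfl, fun w hw => ⟨0, le_rfl, by simpa using hw⟩⟩
  | succ l ih =>
    obtain ⟨q, hq, hl, hs⟩ := ih (fun k hk => hadj k (by omega))
      (hinj.mono fun k (hk : k ≤ l) => Nat.le_succ_of_le hk)
    refine ⟨q.concat (hadj l (by omega)), hq.concat ?_ _, by simp [hl], ?_⟩
    · intro hmem
      obtain ⟨k, hk, h⟩ := hs _ hmem
      have : l + 1 = k := hinj (Set.mem_ofPred.2 le_rfl) (Set.mem_ofPred.2 (by omega)) h
      omega
    · intro w hw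
      rw [Walk.support_concat, List.mem_append, List.mem_singleton] at hw
      rcases hw with hw | rfl
      · obtain ⟨k, hk, h⟩ := hs _ hw
        exact ⟨k, by omega, h⟩
      · exact ⟨l + 1, le_rfl, rfl⟩

theorem crossEdge_mk {S : Set V} {a b : V} :
    crossEdge S s(a, b) ↔ (a ∈ S ∨ b ∈ S) ∧ (a ∉ S ∨ b ∉ S) := by
  simp [crossEdge]

theorem crossCount_cons_le (S : Set V) (e : Sym2 V) (l : List (Sym2 V)) :
    crossCount S (e :: l) ≤ crossCount S l + 1 := by
  unfold crossCount
  rw [List.countP_cons]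
  split_ifs <;> omega

theorem crossCount_cons_of_not {S : Set V} {e : Sym2 V} (l : List (Sym2 V))
    (h : ¬ crossEdge S e) : crossCount S (e :: l) = crossCount S l := by
  simp [crossCount, h]

theorem crossCount_append (S : Set V) (l m : List (Sym2 V)) :
    crossCount S (l ++ m) = crossCount S l + crossCount S m := by
  simp [crossCount]

theorem crossCount_edges_eq_zero {S : Set V} {a b : V} (q : G.Walk a b)
    (h : ∀ w ∈ q.support, w ∈ S) : crossCount S q.edges = 0 := by
  induction q with
  | nil => simp [crossCount]
  | cons hadj q ih =>
    rw [Walk.edges_cons, crossCount_cons_of_not, ih fun w hw => h w (by simp [hw])]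
    rw [crossEdge_mk]
    have h₁ := h _ (Walk.start_mem_support _)
    have h₂ := h _ (List.mem_cons_of_mem _ q.start_mem_support)
    tauto

theorem crossCount_edges_le_one {S : Set V} {a b : V} (q : G.Walk a b) (hq : q.IsPath)
    (h : ∀ w ∈ q.support, w ≠ b → w ∉ S) : crossCount S q.edges ≤ 1 := by
  induction q with
  | nil => simp [crossCount]
  | @cons a c b hadj q ih =>
    rw [Walk.cons_isPath_iff] at hq
    by_cases hcb : c = b
    · subst hcb
      rw [Walk.edges_cons, Walk.edges_eq_nil.2 (Walk.isPath_iff_nil.1 hq.1)]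
      exact crossCount_cons_le _ _ _
    · rw [Walk.edges_cons, crossCount_cons_of_not]
      · exact ih hq.1 fun w hw => h w (by simp [hw])
      · rw [crossEdge_mk]
        have h₁ := h a (by simp) fun hab => hq.2 (hab ▸ q.end_mem_support)
        have h₂ := h c (by simp) hcb
        tauto

theorem crossCount_edges_le_two {S : Set V} {a b : V} (q : G.Walk a b) (hq : q.IsPath)
    (h : ∀ w ∈ q.support, w ≠ a → w ≠ b → w ∉ S) : crossCount S q.edges ≤ 2 := by
  cases q with
  | nil => simp [crossCount]
  | @cons a c b hadj q =>
    rw [Walk.cons_isPath_iff] at hq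
    have := crossCount_edges_le_one (S := S) q hq.1 fun w hw hwb =>
      h w (by simp [hw]) (fun hwa => hq.2 (hwa ▸ hw)) hwb
    have := crossCount_cons_le S s(a, c) q.edges
    rw [Walk.edges_cons]
    omega

/-- A path inside a locally maximal cycle, closed up by a path through the outside, is no longer
than the cycle. -/
theorem length_add_length_le_of_isLocallyMaximal {v₀ : V} {p : G.Walk v₀ v₀}
    (hC : IsLocallyMaximal G p) {a b : V} (P : G.Walk a b) (hP : P.IsPath) (hP2 : 2 ≤ P.length)
    (hPout : ∀ w ∈ P.support, w ≠ a → w ≠ b → w ∉ p.support)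
    (Q : G.Walk b a) (hQ : Q.IsPath) (hQin : ∀ w ∈ Q.support, w ∈ p.support) :
    P.length + Q.length ≤ p.length := by
  by_contra! hlt
  refine hC.2 a (P.append Q) (hP.isCycle_append hQ ?_ (Or.inl hP2)) ⟨by simpa using hlt, ?_⟩
  · intro w hwP hwQ
    have ha : w ≠ a := by
      rintro rfl
      have := hP.support_nodup
      rw [← Walk.cons_tail_support] at this
      exact (List.nodup_cons.1 this).1 hwP
    have hb : w ≠ b := by
      rintro rfl
      have := hQ.support_nodup
      rw [← Walk.cons_tail_support] at this
      exact (List.nodup_cons.1 this).1 hwQ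
    exact hPout w (List.mem_of_mem_tail hwP) ha hb (hQin w (List.mem_of_mem_tail hwQ))
  · rw [Walk.edges_append, crossCount_append, crossCount_edges_eq_zero (S := {x | x ∈ p.support}) Q hQin]
    exact crossCount_edges_le_two P hP hPout

/-- The cyclic parametrisation of a closed walk by the integers. -/
def Walk.cyclicVert {v₀ : V} (p : G.Walk v₀ v₀) (k : ℤ) : V :=
  p.getVert (k % p.length).toNat

section CyclicVert

variable {v₀ : V} {p : G.Walk v₀ v₀}

theorem Walk.cyclicVert_mem_support (k : ℤ) : p.cyclicVert k ∈ p.support :=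
  p.getVert_mem_support _

theorem Walk.cyclicVert_add_length (k : ℤ) : p.cyclicVert (k + p.length) = p.cyclicVert k := by
  simp [Walk.cyclicVert]

theorem Walk.cyclicVert_natCast {k : ℕ} (hk : k < p.length) :
    p.cyclicVert k = p.getVert k := by
  rw [Walk.cyclicVert, Int.emod_eq_of_lt (by omega) (by omega), Int.toNat_natCast]

theorem Walk.IsCycle.adj_cyclicVert (hp : p.IsCycle) (k : ℤ) :
    G.Adj (p.cyclicVert k) (p.cyclicVert (k + 1)) := by
  have hn := hp.three_le_length
  have h0 := Int.emod_nonneg k (b := p.length) (by omega)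
  have h1 := Int.emod_lt_of_pos k (b := p.length) (by omega)
  have key : p.cyclicVert (k + 1) = p.getVert ((k % p.length).toNat + 1) := by
    rw [Walk.cyclicVert, ← Int.emod_add_emod]
    rcases eq_or_ne (k % p.length + 1) p.length with h | h
    · rw [h, Int.emod_self, show (k % p.length).toNat + 1 = p.length by omega]
      simp
    · rw [Int.emod_eq_of_lt (by omega) (by omega)]
      congr 1
      omega
  rw [key]
  exact p.adj_getVert_succ (by omega)

theorem Walk.IsCycle.cyclicVert_injective_window (hp : p.IsCycle) {k l : ℤ}
    (h : p.cyclicVert k = p.cyclicVert l) (h₁ : k < l + p.length) (h₂ : l < k + p.length) :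
    k = l := by
  have hn := hp.three_le_length
  have hk0 := Int.emod_nonneg k (b := p.length) (by omega)
  have hk1 := Int.emod_lt_of_pos k (b := p.length) (by omega)
  have hl0 := Int.emod_nonneg l (b := p.length) (by omega)
  have hl1 := Int.emod_lt_of_pos l (b := p.length) (by omega)
  have := hp.getVert_injOn' (Set.mem_ofPred.2 (by omega)) (Set.mem_ofPred.2 (by omega)) h
  have hmod : k % p.length = l % p.length := by omega
  obtain ⟨m, hm⟩ := Int.dvd_of_emod_eq_zero (Int.emod_eq_emod_iff_emod_sub_eq_zero.1 hmod)
  have : m < 1 := by nlinarith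
  have : -1 < m := by nlinarith
  obtain rfl : m = 0 := by omega
  omega

theorem Walk.exists_cyclicVert_eq (hp : p.IsCycle) (s : ℤ) {w : V} (hw : w ∈ p.support) :
    ∃ k, s ≤ k ∧ k < s + p.length ∧ p.cyclicVert k = w := by
  have hn := hp.three_le_length
  obtain ⟨m, rfl, hm⟩ := Walk.mem_support_iff_exists_getVert.1 hw
  refine ⟨s + ((m - s) % p.length), ?_, ?_, ?_⟩
  · have := Int.emod_nonneg (m - s) (b := p.length) (by omega)
    omega
  · have := Int.emod_lt_of_pos (m - s) (b := p.length) (by omega)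
    omega
  · rw [Walk.cyclicVert, Int.add_emod_emod, add_sub_cancel]
    rcases hm.lt_or_eq with h | rfl
    · rw [Int.emod_eq_of_lt (by omega) (by omega), Int.toNat_natCast]
    · simp

end CyclicVert

/-- Follow an `n`-cycle backwards from `c e` to `c x`, take the chord to `c y`, and follow the cycle
forwards to `c (s + n)`. -/
theorem exists_isPath_chord {c : ℤ → V} {n : ℕ} (hadj : ∀ k, G.Adj (c k) (c (k + 1)))
    (hinj : ∀ k l, c k = c l → k < l + n → l < k + n → k = l) {s e x y : ℤ}
    (hsx : s < x) (hxe : x ≤ e) (hey : e < y) (hys : y ≤ s + n) (hxy : G.Adj (c x) (c y)) :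
    ∃ q : G.Walk (c e) (c (s + n)), q.IsPath ∧ (q.length : ℤ) = (e - x) + 1 + (s + n - y) ∧
      ∀ w ∈ q.support, ∃ k, w = c k := by
  let g : ℕ → ℤ := fun k => if (k : ℤ) ≤ e - x then e - k else y + (k - (e - x) - 1)
  obtain ⟨l, hl⟩ : ∃ l : ℕ, (l : ℤ) = (e - x) + 1 + (s + n - y) :=
    ⟨((e - x) + 1 + (s + n - y)).toNat, by omega⟩
  obtain ⟨q, hq, hlen, hs⟩ := exists_isPath_of_seq (G := G) (fun k => c (g k)) l
    (by
      intro k hk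
      rcases lt_trichotomy (k : ℤ) (e - x) with h | h | h
      · have h₁ : g k = g (k + 1) + 1 := by simp only [g]; split_ifs <;> omega
        change G.Adj (c (g k)) (c (g (k + 1)))
        rw [h₁]
        exact (hadj _).symm
      · have h₁ : g k = x := by simp only [g]; split_ifs <;> omega
        have h₂ : g (k + 1) = y := by simp only [g]; split_ifs <;> omega
        simpa only [h₁, h₂] using hxy
      · have h₁ : g (k + 1) = g k + 1 := by simp only [g]; split_ifs <;> omega
        simpa only [h₁] using hadj _)
    (by
      intro k hk m hm h
      have hk : k ≤ l := hk
      have hm : m ≤ l := hm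
      have := hinj _ _ h (by simp only [g]; split_ifs <;> omega)
        (by simp only [g]; split_ifs <;> omega)
      simp only [g] at this
      split_ifs at this <;> omega)
  have h0 : g 0 = e := by simp only [g]; split_ifs <;> omega
  have h1 : g l = s + n := by simp only [g]; split_ifs <;> omega
  refine ⟨q.copy (by rw [h0]) (by rw [h1]), by simpa using hq, by simp [hlen, hl], ?_⟩
  intro w hw
  obtain ⟨k, -, h⟩ := hs w (by simpa using hw)
  exact ⟨_, h⟩

/-- Given marked positions `I 0 < ⋯ < I t = I 0 + n` on a cycle `c` of length `n` such that any path
on the cycle between two marked vertices has length at most `n - d`, a clique on the cycle misses at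
least `d - 1` interior vertices of one of any two segments between marked positions. -/
theorem le_card_missed_or {c : ℤ → V} {n d : ℕ} (hd : 1 ≤ d)
    (hper : ∀ k, c (k + n) = c k) (hadj : ∀ k, G.Adj (c k) (c (k + 1)))
    (hinj : ∀ k l, c k = c l → k < l + n → l < k + n → k = l)
    {M : Set V}
    (hM : ∀ a ∈ M, ∀ b ∈ M, a ≠ b → ∀ q : G.Walk a b, q.IsPath →
      (∀ w ∈ q.support, ∃ k, w = c k) → q.length + d ≤ n)
    (K : Finset V) (hK : G.IsClique (K : Set V)) [DecidableEq V]
    {s s' e e' : ℤ} (hss : s < s') (hse : s' ≤ e) (hee : e < e') (hes : e' ≤ s + n)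
    (hs : c s ∈ M) (hs' : c s' ∈ M) (he : c e ∈ M) (he' : c e' ∈ M) :
    d - 1 ≤ ((Finset.Ioo s s').filter fun k => c k ∉ K).card ∨
      d - 1 ≤ ((Finset.Ioo e e').filter fun k => c k ∉ K).card := by
  have arc : ∀ a b : ℤ, a < b → b < a + n → c a ∈ M → c b ∈ M → a + d ≤ b := by
    intro a b hab hba ha hb
    obtain ⟨q, hq, hl, hw⟩ := exists_isPath_chord (G := G) hadj hinj (s := a) (e := b) (x := b)
      (y := b + 1) hab le_rfl (by omega) (by omega) (hadj b)
    have := hM _ hb _ (hper a ▸ ha) (fun h => by have := hinj _ _ (h.trans (hper a)); omega) q hq hw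
    omega
  have chord : ∀ {c' : ℤ → V}, (∀ k, c' (k + n) = c' k) → (∀ k, G.Adj (c' k) (c' (k + 1))) →
      (∀ k l, c' k = c' l → k < l + n → l < k + n → k = l) → (∀ k, ∃ l, c' k = c l) →
      ∀ a b x y : ℤ, a < x → x ≤ b → b < y → y ≤ a + n → c' a ∈ M → c' b ∈ M → c' x ∈ K →
      c' y ∈ K → y < x + n → d + 1 ≤ (x - a) + (y - b) := by
    intro c' hper' hadj' hinj' hcc a b x y hax hxb hby hya ha hb hx hy hyx
    have hne : c' x ≠ c' y := fun h => by
      have := hinj' _ _ h (by omega) (by omega)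
      omega
    obtain ⟨q, hq, hl, hw⟩ := exists_isPath_chord hadj' hinj' hax hxb hby hya (hK hx hy hne)
    have := hM _ hb _ (hper' a ▸ ha)
      (fun h => by have := hinj' _ _ (h.trans (hper' a)); omega) q hq
      (fun w h => by
        obtain ⟨k, rfl⟩ := hw w h
        exact hcc k)
    omega
  have missed : ∀ a b x y : ℤ, a < x → x ≤ y → y < b →
      (∀ k, a < k → k < b → c k ∈ K → x ≤ k ∧ k ≤ y) →
      x - a - 1 + (b - y - 1) ≤ ((Finset.Ioo a b).filter fun k => c k ∉ K).card := by
    intro a b x y hax hxy hyb h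
    have hsub : Finset.Ioo a x ∪ Finset.Ioo y b ⊆ (Finset.Ioo a b).filter fun k => c k ∉ K := by
      intro k hk
      simp only [Finset.mem_union, Finset.mem_Ioo, Finset.mem_filter] at hk ⊢
      refine ⟨by omega, fun hkK => ?_⟩
      have := h k (by omega) (by omega) hkK
      omega
    have hcard := Finset.card_le_card hsub
    rw [Finset.card_union_of_disjoint] at hcard
    · simp only [Int.card_Ioo] at hcard
      omega
    · rw [Finset.disjoint_left]
      intro k hk hk'
      simp only [Finset.mem_Ioo] at hk hk'
      omega
  have extremal : ∀ a b : ℤ, a < b → b < a + n → c a ∈ M → c b ∈ M →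
      d - 1 ≤ ((Finset.Ioo a b).filter fun k => c k ∉ K).card ∨
      ∃ x y, a < x ∧ x ≤ y ∧ y < b ∧ c x ∈ K ∧ c y ∈ K ∧
        x - a - 1 + (b - y - 1) ≤ ((Finset.Ioo a b).filter fun k => c k ∉ K).card := by
    intro a b hab hba ha hb
    rcases ((Finset.Ioo a b).filter fun k => c k ∈ K).eq_empty_or_nonempty with h0 | h0
    · left
      have := Finset.card_filter_add_card_filter_not (s := Finset.Ioo a b) (fun k => c k ∈ K)
      rw [h0, Finset.card_empty, Int.card_Ioo] at this
      have := arc a b hab hba ha hb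
      omega
    · right
      have hx := Finset.min'_mem _ h0
      have hy := Finset.max'_mem _ h0
      have hle := Finset.min'_le_max' _ h0
      simp only [Finset.mem_filter, Finset.mem_Ioo] at hx hy
      refine ⟨_, _, hx.1.1, hle, hy.1.2, hx.2, hy.2,
        missed _ _ _ _ hx.1.1 hle hy.1.2 fun k h₁ h₂ h₃ => ?_⟩
      have : k ∈ (Finset.Ioo a b).filter fun k => c k ∈ K := by simp [h₁, h₂, h₃]
      exact ⟨Finset.min'_le _ k this, Finset.le_max' _ k this⟩
  rcases extremal s s' hss (by omega) hs hs' with h | ⟨x, y, hx₁, hxy, hy₁, hx, hy, hm⟩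
  · exact Or.inl h
  rcases extremal e e' hee (by omega) he he' with h | ⟨z, w, hz₁, hzw, hw₁, hz, hw, hm'⟩
  · exact Or.inr h
  have hfwd := chord hper hadj hinj (fun k => ⟨k, rfl⟩) s e x z hx₁ (by omega) hz₁ (by omega)
    hs he hx hz (by omega)
  have hbwd := chord (c' := fun k => c (-k))
    (fun k => by rw [← hper (-(k + n))]; congr 1; ring)
    (fun k => by
      have := hadj (-(k + 1))
      rw [show -(k + 1) + 1 = -k by ring] at this
      exact this.symm)
    (fun k l h h₁ h₂ => by have := hinj _ _ h (by omega) (by omega); omega)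
    (fun k => ⟨-k, rfl⟩) (-e') (-s') (-w) (-y) (by omega) (by omega) (by omega) (by omega)
    (by simpa using he') (by simpa using hs') (by simpa using hw) (by simpa using hy) (by omega)
  omega

/-- If one of any two members of a family of `t` naturals is at least `a`, the sum is at least
`(t - 1) * a`. -/
theorem le_sum_of_pairwise_or {t a : ℕ} (m : ℕ → ℕ)
    (h : ∀ i j, i < j → j < t → a ≤ m i ∨ a ≤ m j) :
    (t - 1) * a ≤ ∑ i ∈ Finset.range t, m i := by
  obtain ⟨i₀, hi₀⟩ : ∃ i₀, ∀ i < t, i ≠ i₀ → a ≤ m i := by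
    by_cases hall : ∀ i < t, a ≤ m i
    · exact ⟨0, fun i hi _ => hall i hi⟩
    · push Not at hall
      obtain ⟨i₀, hi₀, hlt⟩ := hall
      refine ⟨i₀, fun i hi hne => ?_⟩
      rcases hne.lt_or_gt with hl | hl
      · exact (h i i₀ hl hi₀).resolve_right (by omega)
      · exact (h i₀ i hl hi).resolve_left (by omega)
  calc (t - 1) * a ≤ ((Finset.range t).erase i₀).card * a := by
        gcongr
        simpa using Finset.pred_card_le_card_erase (s := Finset.range t) (a := i₀)
    _ ≤ ∑ i ∈ (Finset.range t).erase i₀, m i := by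
        rw [← smul_eq_mul]
        refine Finset.card_nsmul_le_sum _ _ _ fun i hi => ?_
        simp only [Finset.mem_erase, Finset.mem_range] at hi
        exact hi₀ i hi.2 hi.1
    _ ≤ ∑ i ∈ Finset.range t, m i :=
        Finset.sum_le_sum_of_subset (Finset.erase_subset _ _)

/-- A set of vertices of a cycle together with the positions it misses in disjoint segments has at
most as many elements as the cycle. -/
theorem card_add_sum_missed_le {v₀ : V} {p : G.Walk v₀ v₀} (hp : p.IsCycle) {t : ℕ} (I : ℕ → ℤ)
    (hI : ∀ i j, i < j → j ≤ t → I i < I j) (hIt : I t = I 0 + p.length)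
    (K : Finset V) (hK : ∀ w ∈ K, w ∈ p.support) [DecidableEq V] :
    K.card + ∑ i ∈ Finset.range t,
      ((Finset.Ioo (I i) (I (i + 1))).filter fun k => p.cyclicVert k ∉ K).card ≤ p.length := by
  have hmono : ∀ i j, i ≤ j → j ≤ t → I i ≤ I j := fun i j h h' =>
    h.eq_or_lt.elim (fun h => h ▸ le_rfl) fun h => (hI i j h h').le
  have h₁ : K.card ≤ ((Finset.Ico (I 0) (I 0 + p.length)).filter
      fun k => p.cyclicVert k ∈ K).card := by
    refine (Finset.card_le_card fun w hw => ?_).trans (Finset.card_image_le (f := p.cyclicVert))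
    obtain ⟨k, hk, hk', rfl⟩ := Walk.exists_cyclicVert_eq hp (I 0) (hK w hw)
    exact Finset.mem_image_of_mem _ (by simp [hk, hk', hw])
  have h₂ : ∑ i ∈ Finset.range t,
      ((Finset.Ioo (I i) (I (i + 1))).filter fun k => p.cyclicVert k ∉ K).card ≤
      ((Finset.Ico (I 0) (I 0 + p.length)).filter fun k => p.cyclicVert k ∉ K).card := by
    rw [← Finset.card_biUnion]
    · refine Finset.card_le_card fun k hk => ?_
      simp only [Finset.mem_biUnion, Finset.mem_range, Finset.mem_filter, Finset.mem_Ioo,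
        Finset.mem_Ico] at hk ⊢
      obtain ⟨i, hi, hk, hkK⟩ := hk
      have := hmono 0 i (by omega) (by omega)
      have := hmono (i + 1) t (by omega) le_rfl
      exact ⟨by omega, hkK⟩
    · intro i hi j hj hij
      rw [Finset.coe_range, Set.mem_Iio] at hi hj
      rw [Function.onFun, Finset.disjoint_left]
      intro k hk hk'
      simp only [Finset.mem_filter, Finset.mem_Ioo] at hk hk'
      rcases hij.lt_or_gt with h | h
      · have := hmono (i + 1) j (by omega) (by omega)
        omega
      · have := hmono (j + 1) i (by omega) (by omega)
        omega
  have h₃ := Finset.card_filter_add_card_filter_not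
    (s := Finset.Ico (I 0) (I 0 + p.length)) (fun k => p.cyclicVert k ∈ K)
  rw [Int.card_Ico] at h₃
  omega

end SimpleGraph

/-- If `C` is a locally maximal cycle in the 2-connected graph `G`, `R` a component of
`G - C`, `T` a strong attachment of `R` to `C` of size `t`, and every pair of vertices of
`T` is joined by a path of length `≥ d ≥ 2` with internal vertices in `R`, then the clique
number of `G[V(C)]` is at most `|C| - (d-1)(t-1)`. -/
theorem stmt14 {V : Type*} [Fintype V] (G : SimpleGraph V) (hG : TwoConnected G)
    (v0 : V) (p : G.Walk v0 v0) (hC : IsLocallyMaximal G p) (R : Set V)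
    (hR : IsCompOutside G {x | x ∈ p.support} R)
    (t : ℕ) [NeZero t] (u : Fin t → V) (hinj : Function.Injective u)
    (hT : ∀ i : Fin t, u i ∈ p.support ∧ ∃ r ∈ R, G.Adj (u i) r)
    (hSA : IsStrongAttachment G p R u)
    (d : ℕ) (hd2 : 2 ≤ d)
    (hpaths : ∀ i j : Fin t, i ≠ j →
      ∃ P : G.Walk (u i) (u j), P.IsPath ∧ d ≤ P.length ∧
        ∀ w ∈ P.support, w ≠ u i → w ≠ u j → w ∈ R) :
    ∀ K : Finset V, (K : Set V) ⊆ {x | x ∈ p.support} → G.IsClique (K : Set V) →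
      (K.card : ℤ) ≤ (p.length : ℤ) - (d - 1 : ℤ) * (t - 1 : ℤ) := by
  classical
  intro K hKp hK
  obtain ⟨⟨idx, hidx, hidxp⟩, hSA⟩ := hSA
  have ht0 : t ≠ 0 := NeZero.ne t
  have ht2 : 2 ≤ t := by
    by_contra hlt
    obtain rfl : t = 1 := by omega
    obtain ⟨y, z, -, -, -, -, -, hne⟩ := hSA 0
    exact hne (congrArg u (Subsingleton.elim _ _))
  have hp := hC.1
  have hM : ∀ a ∈ Set.range u, ∀ b ∈ Set.range u, a ≠ b → ∀ q : G.Walk a b, q.IsPath →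
      (∀ w ∈ q.support, ∃ k, w = p.cyclicVert k) → q.length + d ≤ p.length := by
    rintro _ ⟨i, rfl⟩ _ ⟨j, rfl⟩ hne q hq hw
    obtain ⟨P, hP, hdP, hPR⟩ := hpaths j i fun h => hne (h ▸ rfl)
    have := length_add_length_le_of_isLocallyMaximal hC P hP (by omega)
      (fun w hw ha hb hmem => Set.disjoint_left.1 hR.2.1 (hPR w hw ha hb) hmem) q hq
      (fun w h => by
        obtain ⟨k, rfl⟩ := hw w h
        exact Walk.cyclicVert_mem_support k)
    omega
  let I : ℕ → ℤ := fun k => if h : k < t then idx ⟨k, h⟩ else idx ⟨0, by omega⟩ + p.length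
  have hIlt : ∀ k (h : k < t), I k = idx ⟨k, h⟩ := fun k h => dif_pos h
  have hIt : I t = I 0 + p.length := by simp [I, Nat.pos_of_ne_zero ht0]
  have hI : ∀ i j, i < j → j ≤ t → I i < I j := by
    intro i j hij hjt
    rw [hIlt i (by omega)]
    rcases hjt.lt_or_eq with h | rfl
    · rw [hIlt j h]
      exact_mod_cast hidx (Fin.mk_lt_mk.2 hij)
    · have := (hidxp ⟨i, hij⟩).1
      rw [hIt, hIlt 0 (by omega)]
      omega
  have hIle : ∀ i j, i ≤ j → j ≤ t → I i ≤ I j := fun i j h h' =>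
    h.eq_or_lt.elim (fun h => h ▸ le_rfl) fun h => (hI i j h h').le
  have hIM : ∀ k ≤ t, p.cyclicVert (I k) ∈ Set.range u := by
    have hlt : ∀ k < t, p.cyclicVert (I k) ∈ Set.range u := fun k h => by
      rw [hIlt k h, Walk.cyclicVert_natCast (hidxp _).1]
      exact ⟨_, (hidxp _).2.symm⟩
    intro k hk
    rcases hk.lt_or_eq with h | rfl
    · exact hlt k h
    · rw [hIt, Walk.cyclicVert_add_length]
      exact hlt 0 (by omega)
  have hsum := le_sum_of_pairwise_or (t := t) (a := d - 1)
    (fun i => ((Finset.Ioo (I i) (I (i + 1))).filter fun k => p.cyclicVert k ∉ K).card)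
    (fun i j hij hj => le_card_missed_or (by omega) Walk.cyclicVert_add_length hp.adj_cyclicVert
      (fun k l => hp.cyclicVert_injective_window) hM K hK (hI _ _ (by omega) (by omega))
      (hIle _ _ (by omega) (by omega)) (hI _ _ (by omega) (by omega))
      ((hIle (j + 1) t (by omega) le_rfl).trans
        (hIt.le.trans (add_le_add_left (hIle 0 i (by omega) (by omega)) _)))
      (hIM _ (by omega)) (hIM _ (by omega)) (hIM _ (by omega)) (hIM _ (by omega)))
  have hcard := card_add_sum_missed_le hp I hI hIt K (fun w hw => hKp hw)
  have hle : K.card + (t - 1) * (d - 1) ≤ p.length := (Nat.add_le_add_left hsum _).trans hcard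
  zify [show 1 ≤ t by omega, show 1 ≤ d by omega] at hle
  linarith
end
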